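/- arXiv:1710.10009 — 4 statements merged into one kernel-verified Lean document; each statement's English description precedes it below -/
import Mathlib

section
/- Let B, C, D be unital C*-algebras and let δ : B → D, γ : C → D be unital *-homomorphisms with at least one of γ, δ surjective, and let A = B ⊕_D C = {(b,c) ∈ B ⊕ C : δ(b) = γ(c)} be the pullback C*-algebra. Assume K_1(D) = 0, i.e. for every k ≥ 1 and every h ∈ GL_k(D) there exists m ≥ 0 such that diag(h, I_m) lies in the connected component of the identity of GL_{k+m}(D). Then gsr(A) ≤ max{gsr(B), gsr(C), inj_0(D)} (as elements of ℕ ∪ {∞}). -/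
/-!
A unimodular vector over the pullback is a compatible pair of unimodular vectors `b` over `B` and
`c` over `C`. Above the general stable ranks of `B` and `C`, both are last columns of invertible
matrices `S` and `T`. The images of `S` and `T` over `D` have the same last column, so they differ
by an invertible matrix `h` with last column `e`, that is, `h` has rows `(x, 0)` and `(y, 1)` with
`x` invertible of size one less (`eq_lowTri`, `isUnit_of_lowTri`).

Since `K_1(D) = 0`, some stabilization of `x` lies in the identity component; injectivity of the
stabilization maps on `π_0` brings this down to `x` itself (`joined_of_stabIter`). Say `γ` is
surjective. By the open mapping theorem the invertible matrices over `D` that lift along `γ` form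
an open and closed subgroup, so `x` lifts (`exists_lift_of_joined`), and `y` lifts entrywise.
Multiplying `T` by the lift of `h` leaves its last column unchanged and makes its image equal to
that of `S` (`exists_adjust`); the pair is then an invertible matrix over the pullback with last
column `(b, c)` (`pullback_GLtrans`). The case of surjective `δ` is symmetric.
-/

open scoped unitInterval

noncomputable section

/-- The set of left unimodular vectors in `A^m`. -/
def Lg (m : ℕ) (A : Type*) [Ring A] : Set (Fin m → A) :=
  {v | ∃ w : Fin m → A, ∑ i, w i * v i = 1}

/-- `GL_m(A)` acts transitively on `Lg_m(A)`. -/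
def GLtrans (m : ℕ) (A : Type*) [Ring A] : Prop :=
  ∀ v ∈ Lg m A, ∀ w ∈ Lg m A,
    ∃ M : Matrix (Fin m) (Fin m) A, IsUnit M ∧ M.mulVec v = w

/-- The general stable rank: the least `n ≥ 1` such that `GL_m(A)` acts transitively on
`Lg_m(A)` for all `m ≥ n` (and `∞` if no such `n` exists). -/
def gsr (A : Type*) [Ring A] : ℕ∞ :=
  sInf {N : ℕ∞ | ∃ n : ℕ, N = n ∧ 1 ≤ n ∧ ∀ m : ℕ, n ≤ m → GLtrans m A}

/-- The connected stable rank: the least `n ≥ 1` such that `Lg_m(A)` is connected for all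
`m ≥ n` (and `∞` if no such `n` exists). -/
def csr (A : Type*) [Ring A] [TopologicalSpace A] : ℕ∞ :=
  sInf {N : ℕ∞ | ∃ n : ℕ, N = n ∧ 1 ≤ n ∧ ∀ m : ℕ, n ≤ m → IsConnected (Lg m A)}

/-- Invertible `m × m` matrices over `A`, topologized as a subspace of the matrices. -/
abbrev GLs (m : ℕ) (A : Type*) [Ring A] : Type _ :=
  {M : Matrix (Fin m) (Fin m) A // IsUnit M}

/-- The identity matrix as base point of `GL_m(A)`. -/
def GLone (m : ℕ) (A : Type*) [Ring A] : GLs m A := ⟨1, isUnit_one⟩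

/-- The stabilization map `M ↦ diag(M, 1)` on matrices. -/
def stab {A : Type*} [Ring A] {n : ℕ} (M : Matrix (Fin n) (Fin n) A) :
    Matrix (Fin (n + 1)) (Fin (n + 1)) A :=
  (Matrix.fromBlocks M 0 0 (1 : Matrix (Fin 1) (Fin 1) A)).submatrix
    finSumFinEquiv.symm finSumFinEquiv.symm

theorem stab_one {A : Type*} [Ring A] {n : ℕ} :
    stab (1 : Matrix (Fin n) (Fin n) A) = 1 := by
  rw [stab, Matrix.fromBlocks_one, Matrix.submatrix_one_equiv]

theorem stab_mul {A : Type*} [Ring A] {n : ℕ} (M N : Matrix (Fin n) (Fin n) A) :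
    stab M * stab N = stab (M * N) := by
  rw [stab, stab, stab, Matrix.submatrix_mul_equiv, Matrix.fromBlocks_multiply]
  simp

theorem stab_isUnit {A : Type*} [Ring A] {n : ℕ} {M : Matrix (Fin n) (Fin n) A}
    (h : IsUnit M) : IsUnit (stab M) := by
  obtain ⟨u, rfl⟩ := h
  refine isUnit_iff_exists.mpr ⟨stab (u⁻¹ : (Matrix (Fin n) (Fin n) A)ˣ).val, ?_, ?_⟩
  · rw [stab_mul, Units.mul_inv, stab_one]
  · rw [stab_mul, Units.inv_mul, stab_one]

theorem continuous_stab {A : Type*} [Ring A] [TopologicalSpace A] {n : ℕ} :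
    Continuous fun M : Matrix (Fin n) (Fin n) A => stab M := by
  unfold stab
  exact (continuous_id.matrix_fromBlocks continuous_const continuous_const
    continuous_const).matrix_submatrix _ _

/-- The stabilization map `θ : GL_n(A) → GL_{n+1}(A)`, `M ↦ diag(M, 1)`. -/
def stabGL {A : Type*} [Ring A] {n : ℕ} (M : GLs n A) : GLs (n + 1) A :=
  ⟨stab M.1, stab_isUnit M.2⟩

theorem stabGL_one {A : Type*} [Ring A] {n : ℕ} :
    stabGL (GLone n A) = GLone (n + 1) A :=
  Subtype.ext stab_one

theorem continuous_stabGL {A : Type*} [Ring A] [TopologicalSpace A] {n : ℕ} :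
    Continuous (stabGL (A := A) (n := n)) :=
  Continuous.subtype_mk (continuous_stab.comp continuous_subtype_val) _

/-- Stabilization as a continuous map `GL_n(A) → GL_{n+1}(A)`. -/
def stabCM (n : ℕ) (A : Type*) [Ring A] [TopologicalSpace A] :
    ContinuousMap (GLs n A) (GLs (n + 1) A) :=
  ⟨stabGL, continuous_stabGL⟩

theorem stabCM_one {A : Type*} [Ring A] [TopologicalSpace A] {n : ℕ} :
    stabCM n A (GLone n A) = GLone (n + 1) A :=
  stabGL_one

/-- Push a generalized loop forward along a based continuous map. -/
def GenLoop.push {N X Y : Type*} [TopologicalSpace X] [TopologicalSpace Y]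
    {x : X} {y : Y} (f : ContinuousMap X Y) (hf : f x = y)
    (p : GenLoop N X x) : GenLoop N Y y :=
  ⟨f.comp p.1, fun t ht => by
    simp only [ContinuousMap.comp_apply]
    rw [p.2 t ht, hf]⟩

/-- The map `π_k(GL_m(A)) → π_k(GL_{m+1}(A))` (based at the identity matrices) induced by
the stabilization map is injective. -/
def pikInj (k : ℕ) (A : Type*) [Ring A] [TopologicalSpace A] (m : ℕ) : Prop :=
  ∀ a b : GenLoop (Fin k) (GLs m A) (GLone m A),
    GenLoop.Homotopic (GenLoop.push (stabCM m A) stabCM_one a)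
      (GenLoop.push (stabCM m A) stabCM_one b) → GenLoop.Homotopic a b

/-- The map `π_k(GL_m(A)) → π_k(GL_{m+1}(A))` (based at the identity matrices) induced by
the stabilization map is surjective. -/
def pikSurj (k : ℕ) (A : Type*) [Ring A] [TopologicalSpace A] (m : ℕ) : Prop :=
  ∀ b : GenLoop (Fin k) (GLs (m + 1) A) (GLone (m + 1) A),
    ∃ a : GenLoop (Fin k) (GLs m A) (GLone m A),
      GenLoop.Homotopic (GenLoop.push (stabCM m A) stabCM_one a) b

/-- `inj_k(A)`: the least `n ≥ 1` such that `π_k(GL_{m-1}(A)) → π_k(GL_m(A))` is injective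
for all `m ≥ n` (and `∞` if no such `n` exists). -/
def injRank (k : ℕ) (A : Type*) [Ring A] [TopologicalSpace A] : ℕ∞ :=
  sInf {N : ℕ∞ | ∃ n : ℕ, N = n ∧ 1 ≤ n ∧ ∀ m : ℕ, n ≤ m + 1 → pikInj k A m}

/-- `surj_k(A)`: the least `n ≥ 1` such that `π_k(GL_{m-1}(A)) → π_k(GL_m(A))` is surjective
for all `m ≥ n` (and `∞` if no such `n` exists). -/
def surjRank (k : ℕ) (A : Type*) [Ring A] [TopologicalSpace A] : ℕ∞ :=
  sInf {N : ℕ∞ | ∃ n : ℕ, N = n ∧ 1 ≤ n ∧ ∀ m : ℕ, n ≤ m + 1 → pikSurj k A m}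

/-- The pullback `B ⊕_D C` as a star subalgebra of `B × C`. -/
def pullbackAlg {B C D : Type*} [Ring B] [Ring C] [Ring D]
    [Algebra ℂ B] [Algebra ℂ C] [Algebra ℂ D]
    [StarRing B] [StarRing C] [StarRing D]
    [StarModule ℂ B] [StarModule ℂ C] [StarModule ℂ D]
    (δ : B →⋆ₐ[ℂ] D) (γ : C →⋆ₐ[ℂ] D) : StarSubalgebra ℂ (B × C) where
  carrier := {x | δ x.1 = γ x.2}
  mul_mem' {a b} ha hb := by
    simp only [Set.mem_setOf_eq, Prod.fst_mul, Prod.snd_mul, map_mul] at *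
    rw [ha, hb]
  one_mem' := by simp
  add_mem' {a b} ha hb := by
    simp only [Set.mem_setOf_eq, Prod.fst_add, Prod.snd_add, map_add] at *
    rw [ha, hb]
  zero_mem' := by simp
  algebraMap_mem' r := by
    simp only [Set.mem_setOf_eq]
    show δ ((algebraMap ℂ (B × C)) r).1 = γ ((algebraMap ℂ (B × C)) r).2
    simp only [Prod.algebraMap_apply]
    rw [AlgHomClass.commutes, AlgHomClass.commutes]
  star_mem' {a} ha := by
    simp only [Set.mem_setOf_eq, Prod.fst_star, Prod.snd_star, map_star] at *
    rw [ha]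

/-- Iterated stabilization `h ↦ diag(h, I_m)`. -/
def stabIter {A : Type*} [Ring A] {k : ℕ} : (m : ℕ) → GLs k A → GLs (k + m) A
  | 0, h => h
  | m + 1, h => stabGL (stabIter m h)


open scoped CStarAlgebra

/-! ### Matrices fixing the last basis vector -/

/-- The last standard basis vector of `A^(k+1)`. -/
def lastVec (k : ℕ) (A : Type*) [Ring A] : Fin (k + 1) → A := Pi.single (Fin.last k) 1

/-- The block matrix with rows `(X, 0)` and `(Y, 1)`; these are exactly the matrices whose
last column is the last basis vector. -/
def lowTri {A : Type*} [Ring A] {k : ℕ} (X : Matrix (Fin k) (Fin k) A)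
    (Y : Matrix (Fin 1) (Fin k) A) : Matrix (Fin (k + 1)) (Fin (k + 1)) A :=
  (Matrix.fromBlocks X 0 Y (1 : Matrix (Fin 1) (Fin 1) A)).submatrix
    finSumFinEquiv.symm finSumFinEquiv.symm

section Ring

variable {A C D : Type*} [Ring A] [Ring C] [Ring D] {k : ℕ}

theorem lowTri_one : lowTri (1 : Matrix (Fin k) (Fin k) A) 0 = 1 := by
  rw [lowTri, Matrix.fromBlocks_one, Matrix.submatrix_one_equiv]

theorem lowTri_mul (X X' : Matrix (Fin k) (Fin k) A) (Y Y' : Matrix (Fin 1) (Fin k) A) :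
    lowTri X Y * lowTri X' Y' = lowTri (X * X') (Y * X' + Y') := by
  rw [lowTri, lowTri, lowTri, Matrix.submatrix_mul_equiv, Matrix.fromBlocks_multiply]
  simp

theorem lowTri_inj {X X' : Matrix (Fin k) (Fin k) A} {Y Y' : Matrix (Fin 1) (Fin k) A}
    (h : lowTri X Y = lowTri X' Y') : X = X' := by
  ext i j
  simpa [lowTri] using congrFun (congrFun h (finSumFinEquiv (Sum.inl i)))
    (finSumFinEquiv (Sum.inl j))

theorem lowTri_map (f : C →+* D) (X : Matrix (Fin k) (Fin k) C) (Y : Matrix (Fin 1) (Fin k) C) :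
    (lowTri X Y).map f = lowTri (X.map f) (Y.map f) := by
  simp [lowTri, ← Matrix.submatrix_map, Matrix.fromBlocks_map]

theorem lowTri_isUnit {X : Matrix (Fin k) (Fin k) A} (hX : IsUnit X)
    (Y : Matrix (Fin 1) (Fin k) A) : IsUnit (lowTri X Y) := by
  obtain ⟨X', h1, h2⟩ := isUnit_iff_exists.mp hX
  refine isUnit_iff_exists.mpr ⟨lowTri X' (-(Y * X')), ?_, ?_⟩
  · rw [lowTri_mul, h1, add_neg_cancel, lowTri_one]
  · rw [lowTri_mul, h2, Matrix.neg_mul, Matrix.mul_assoc, h2, Matrix.mul_one, neg_add_cancel,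
      lowTri_one]

theorem mulVec_lastVec_apply (M : Matrix (Fin (k + 1)) (Fin (k + 1)) A) (i : Fin (k + 1)) :
    M.mulVec (lastVec k A) i = M i (Fin.last k) := by
  rw [lastVec, Matrix.mulVec_single_one]; rfl

theorem map_mulVec_lastVec (f : C →+* D) (M : Matrix (Fin (k + 1)) (Fin (k + 1)) C) :
    (M.map f).mulVec (lastVec k D) = f ∘ M.mulVec (lastVec k C) := by
  ext i; simp [mulVec_lastVec_apply]

theorem lowTri_mulVec (X : Matrix (Fin k) (Fin k) A) (Y : Matrix (Fin 1) (Fin k) A) :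
    (lowTri X Y).mulVec (lastVec k A) = lastVec k A := by
  ext i
  rw [mulVec_lastVec_apply]
  obtain ⟨i, rfl⟩ := finSumFinEquiv.surjective i
  have hl : Fin.last k = finSumFinEquiv (m := k) (n := 1) (Sum.inr 0) := by
    ext; simp
  rw [lastVec, hl]
  rcases i with i | i
  · rw [Pi.single_eq_of_ne (finSumFinEquiv.injective.ne (by simp))]; simp [lowTri]
  · obtain rfl : i = 0 := Subsingleton.elim _ _
    rw [Pi.single_eq_same]; simp [lowTri]

theorem eq_lowTri {M : Matrix (Fin (k + 1)) (Fin (k + 1)) A}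
    (h : M.mulVec (lastVec k A) = lastVec k A) : ∃ X Y, M = lowTri X Y := by
  let N := M.submatrix (finSumFinEquiv (m := k) (n := 1)) finSumFinEquiv
  have hl : Fin.last k = finSumFinEquiv (m := k) (n := 1) (Sum.inr 0) := by
    ext; simp
  have h' : ∀ i, N i (Sum.inr 0) = lastVec k A (finSumFinEquiv i) := fun i => by
    rw [← h, mulVec_lastVec_apply, hl]; rfl
  refine ⟨N.toBlocks₁₁, N.toBlocks₂₁, ?_⟩
  have h12 : N.toBlocks₁₂ = 0 := by
    ext i j
    obtain rfl : j = 0 := Subsingleton.elim _ _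
    refine (h' (Sum.inl i)).trans ?_
    rw [lastVec, hl, Pi.single_eq_of_ne (finSumFinEquiv.injective.ne (by simp))]; rfl
  have h22 : N.toBlocks₂₂ = 1 := by
    ext i j
    obtain rfl : j = 0 := Subsingleton.elim _ _
    obtain rfl : i = 0 := Subsingleton.elim _ _
    refine (h' (Sum.inr 0)).trans ?_
    rw [lastVec, hl, Pi.single_eq_same]; rfl
  have hN : N = Matrix.fromBlocks N.toBlocks₁₁ 0 N.toBlocks₂₁ 1 := by
    rw [← h12, ← h22, Matrix.fromBlocks_toBlocks]
  rw [lowTri, ← hN]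
  simp [N]

/-- The inverse of a matrix fixing the last basis vector fixes it too, so it has the same block
shape and its corner inverts `X`. -/
theorem isUnit_of_lowTri {X : Matrix (Fin k) (Fin k) A} {Y : Matrix (Fin 1) (Fin k) A}
    (h : IsUnit (lowTri X Y)) : IsUnit X := by
  obtain ⟨N, h1, h2⟩ := isUnit_iff_exists.mp h
  have hN : N.mulVec (lastVec k A) = lastVec k A := by
    conv_lhs => rw [← lowTri_mulVec X Y, Matrix.mulVec_mulVec, h2, Matrix.one_mulVec]
  obtain ⟨X', Y', rfl⟩ := eq_lowTri hN
  rw [lowTri_mul, ← lowTri_one] at h1 h2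
  exact isUnit_iff_exists.mpr ⟨X', lowTri_inj h1, lowTri_inj h2⟩

theorem isUnit_matrix_map (f : C →+* D) {M : Matrix (Fin k) (Fin k) C} (h : IsUnit M) :
    IsUnit (M.map f) :=
  h.map f.mapMatrix

theorem lastVec_mem_Lg : lastVec k A ∈ Lg (k + 1) A :=
  ⟨lastVec k A, by simp [lastVec, Pi.single_apply]⟩

/-- Transitivity of the action follows if the orbit of the last basis vector is everything. -/
theorem GLtrans_of_orbit
    (h : ∀ v ∈ Lg (k + 1) A, ∃ M : Matrix (Fin (k + 1)) (Fin (k + 1)) A,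
      IsUnit M ∧ M.mulVec (lastVec k A) = v) : GLtrans (k + 1) A := by
  intro v hv w hw
  obtain ⟨M, hM, rfl⟩ := h v hv
  obtain ⟨N, hN, rfl⟩ := h w hw
  obtain ⟨M', h1, h2⟩ := isUnit_iff_exists.mp hM
  refine ⟨N * M', hN.mul (isUnit_iff_exists.mpr ⟨M, h2, h1⟩), ?_⟩
  rw [Matrix.mulVec_mulVec, Matrix.mul_assoc, h2, Matrix.mul_one]

end Ring

/-! ### Extracting bounds from the stable ranks -/

/-- Both `gsr` (with `s = 0`) and `injRank` (with `s = 1`) are infima of sets of this shape; a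
finite bound on the infimum gives the defining property from that bound on. -/
theorem of_sInf_le {P : ℕ → Prop} {s N : ℕ}
    (h : sInf {N : ℕ∞ | ∃ n : ℕ, N = n ∧ 1 ≤ n ∧ ∀ m : ℕ, n ≤ m + s → P m} ≤ N) :
    1 ≤ N ∧ ∀ m, N ≤ m + s → P m := by
  have hne : {N : ℕ∞ | ∃ n : ℕ, N = n ∧ 1 ≤ n ∧ ∀ m : ℕ, n ≤ m + s → P m}.Nonempty := by
    by_contra hc
    rw [Set.not_nonempty_iff_eq_empty.mp hc] at h
    simp at h
  obtain ⟨n, hn, h1, h2⟩ := csInf_mem hne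
  rw [hn] at h
  have h' : n ≤ N := by exact_mod_cast h
  exact ⟨h1.trans h', fun m hm => h2 m (h'.trans hm)⟩

/-! ### The identity component of the general linear group -/

section Topology

variable {C D : Type*} [CStarAlgebra C] [CStarAlgebra D] {k : ℕ}

section Norm

open scoped Matrix.Norms.Operator

theorem isOpen_isUnit_matrix : IsOpen {M : Matrix (Fin k) (Fin k) D | IsUnit M} := by
  -- the uniformity of the operator norm is the product uniformity, which is complete
  have hc : @CompleteSpace (Matrix (Fin k) (Fin k) D) PseudoMetricSpace.toUniformSpace :=
    (inferInstance : @CompleteSpace (Matrix (Fin k) (Fin k) D) (Matrix.instUniformSpace _ _ _))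
  have hs : HasSummableGeomSeries (Matrix (Fin k) (Fin k) D) :=
    inferInstance
  exact Units.isOpen

end Norm

instance locallyPathConnectedSpace_GLs : LocallyPathConnectedSpace (GLs k D) := by
  have : LocallyPathConnectedSpace (Matrix (Fin k) (Fin k) D) :=
    inferInstanceAs (LocallyPathConnectedSpace (Fin k → Fin k → D))
  exact isOpen_isUnit_matrix.locallyPathConnectedSpace

theorem joined_of_homotopic {X : Type*} [TopologicalSpace X] {x : X}
    {a b : GenLoop (Fin 0) X x} (h : GenLoop.Homotopic a b) (t : Fin 0 → I) :
    Joined (a t) (b t) := by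
  obtain ⟨F⟩ := h
  exact ⟨⟨⟨fun s => F (s, t), by fun_prop⟩, by simp, by simp⟩⟩

theorem homotopic_of_joined {X : Type*} [TopologicalSpace X] {x : X}
    {a b : GenLoop (Fin 0) X x} (t : Fin 0 → I) (h : Joined (a t) (b t)) :
    GenLoop.Homotopic a b := by
  obtain ⟨p⟩ := h
  refine ⟨⟨⟨⟨fun s => p s.1, by fun_prop⟩, fun u => ?_, fun u => ?_⟩, ?_⟩⟩
  · obtain rfl := Subsingleton.elim u t; simp
  · obtain rfl := Subsingleton.elim u t; simp
  · rintro s y ⟨i, -⟩; exact i.elim0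

/-- Generalized loops of dimension `0` are points, so `pikInj 0` is injectivity of the
stabilization map on path components. -/
theorem pikInj.joined {m : ℕ} (h : pikInj 0 D m) {M : GLs m D}
    (hM : Joined (stabGL M) (GLone (m + 1) D)) : Joined M (GLone m D) := by
  let pt (N : GLs m D) : GenLoop (Fin 0) (GLs m D) (GLone m D) :=
    ⟨ContinuousMap.const _ N, by rintro y ⟨i, -⟩; exact i.elim0⟩
  have t : Fin 0 → I := fun i => i.elim0
  refine joined_of_homotopic (h (pt M) (pt (GLone m D)) (homotopic_of_joined t ?_)) t
  show Joined (stabGL M) (stabGL (GLone m D))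
  rwa [stabGL_one]

/-- Injectivity of stabilization on path components from size `k` on lets a path to the identity
descend from `diag(M, I_j)` to `M`. -/
theorem joined_of_stabIter (hinj : ∀ m, k ≤ m → pikInj 0 D m) (M : GLs k D) :
    ∀ j, Joined (stabIter j M) (GLone (k + j) D) → Joined M (GLone k D)
  | 0, h => h
  | j + 1, h => joined_of_stabIter hinj M j ((hinj (k + j) (by omega)).joined h)

/-- If `γ` is surjective, the image of `GL_k(C)` is a subgroup of `GL_k(D)` which is open by the
open mapping theorem, hence closed, so it contains the identity component. -/
theorem exists_lift_of_joined (γ : C →⋆ₐ[ℂ] D) (hγ : Function.Surjective γ) {x : GLs k D}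
    (hx : Joined x (GLone k D)) :
    ∃ X : Matrix (Fin k) (Fin k) C, IsUnit X ∧ X.map γ = x.1 := by
  have hopen1 : IsOpenMap γ :=
    ContinuousLinearMap.isOpenMap (⟨γ.toAlgHom.toLinearMap, map_continuous γ⟩ : C →L[ℂ] D) hγ
  have hopen : IsOpenMap fun M : Matrix (Fin k) (Fin k) C => M.map γ :=
    IsOpenMap.piMap (f := fun _ : Fin k => Pi.map fun _ : Fin k => (γ : C → D))
      (fun _ => IsOpenMap.piMap (fun _ => hopen1) (by simp)) (by simp)
  let L : Set (GLs k D) := {x | ∃ X : Matrix (Fin k) (Fin k) C, IsUnit X ∧ X.map γ = x.1}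
  have hLo : IsOpen L :=
    (hopen _ isOpen_isUnit_matrix).preimage continuous_subtype_val
  have hLc : IsOpen Lᶜ := by
    rw [isOpen_iff_mem_nhds]
    intro y hy
    obtain ⟨y', h1, h2⟩ := isUnit_iff_exists.mp y.2
    -- the coset `L * y` is an open neighbourhood of `y` disjoint from `L`
    let r : GLs k D → GLs k D := fun z =>
      ⟨z.1 * y', z.2.mul (isUnit_iff_exists.mpr ⟨y.1, h2, h1⟩)⟩
    have hr : Continuous r :=
      (continuous_subtype_val.matrix_mul continuous_const).subtype_mk _
    refine Filter.mem_of_superset ((hLo.preimage hr).mem_nhds ?_) ?_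
    · exact ⟨1, isUnit_one, by simp [r, h1]⟩
    · rintro z ⟨X, hX, hXz⟩ ⟨Z, hZ, hZz⟩
      obtain ⟨X', h3, h4⟩ := isUnit_iff_exists.mp hX
      refine hy ⟨X' * Z, (isUnit_iff_exists.mpr ⟨X, h4, h3⟩).mul hZ, ?_⟩
      have hXz' : X.map γ = z.1 * y' := hXz
      have h5 : X'.map γ * X.map γ = 1 := by
        rw [← Matrix.map_mul, h4]; simp
      have h6 : X.map γ * y.1 = z.1 := by rw [hXz', Matrix.mul_assoc, h2, Matrix.mul_one]
      rw [Matrix.map_mul, hZz, ← h6, ← Matrix.mul_assoc, h5, Matrix.one_mul]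
  have hLclopen : IsClopen L := ⟨⟨hLc⟩, hLo⟩
  have h1 : GLone k D ∈ L := ⟨1, isUnit_one, by simp [GLone]⟩
  exact hLclopen.connectedComponent_subset h1
    (pathComponent_subset_component _ hx.symm)

/-- When `GL_k(D)` is path connected, an invertible `T` may be modified, without changing its last column, into a
lift of any invertible matrix over `D` having the same last column as the image of `T`. -/
theorem exists_adjust (γ : C →⋆ₐ[ℂ] D) (hγ : Function.Surjective γ)
    (hD : ∀ x : GLs k D, Joined x (GLone k D))
    {T : Matrix (Fin (k + 1)) (Fin (k + 1)) C} (hT : IsUnit T)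
    {s : Matrix (Fin (k + 1)) (Fin (k + 1)) D} (hs : IsUnit s)
    (h : s.mulVec (lastVec k D) = γ ∘ T.mulVec (lastVec k C)) :
    ∃ T' : Matrix (Fin (k + 1)) (Fin (k + 1)) C, IsUnit T' ∧
      T'.mulVec (lastVec k C) = T.mulVec (lastVec k C) ∧ T'.map γ = s := by
  obtain ⟨U, h1, h2⟩ := isUnit_iff_exists.mp hT
  have h1' : T.map γ * U.map γ = 1 := by rw [← Matrix.map_mul, h1]; simp
  have h2' : U.map γ * T.map γ = 1 := by rw [← Matrix.map_mul, h2]; simp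
  have hfix : (U.map γ * s).mulVec (lastVec k D) = lastVec k D := by
    have := map_mulVec_lastVec (γ : C →+* D) T
    rw [← Matrix.mulVec_mulVec, h]
    erw [← this]
    erw [Matrix.mulVec_mulVec, h2', Matrix.one_mulVec]
  have hunit : IsUnit (U.map γ * s) :=
    (isUnit_iff_exists.mpr ⟨T.map γ, h2', h1'⟩).mul hs
  obtain ⟨x, y, hxy⟩ := eq_lowTri hfix
  rw [hxy] at hunit
  obtain ⟨X, hX, hXx⟩ := exists_lift_of_joined γ hγ (hD ⟨x, isUnit_of_lowTri hunit⟩)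
  choose g hg using hγ
  refine ⟨T * lowTri X (y.map g), hT.mul (lowTri_isUnit hX _), ?_, ?_⟩
  · rw [← Matrix.mulVec_mulVec, lowTri_mulVec]
  · have hy : (y.map g).map γ = y := by ext i j; simp [hg]
    have := lowTri_map (γ : C →+* D) X (y.map g)
    have h3 : (lowTri X (y.map g)).map γ = lowTri x y := by
      refine this.trans ?_
      erw [hXx, hy]
    rw [Matrix.map_mul, h3, ← hxy, ← Matrix.mul_assoc, h1', Matrix.one_mul]

end Topology

/-! ### Invertible matrices over the pullback -/

section Pullback

variable {B C D : Type*} [CStarAlgebra B] [CStarAlgebra C] [CStarAlgebra D]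
  {δ : B →⋆ₐ[ℂ] D} {γ : C →⋆ₐ[ℂ] D} {k : ℕ}

/-- The matrix over the pullback with given compatible components. -/
def pairMatrix (S : Matrix (Fin k) (Fin k) B) (T : Matrix (Fin k) (Fin k) C)
    (h : S.map δ = T.map γ) : Matrix (Fin k) (Fin k) (pullbackAlg δ γ) :=
  fun i j => ⟨(S i j, T i j), congrFun (congrFun h i) j⟩

theorem pairMatrix_mul {S S' : Matrix (Fin k) (Fin k) B} {T T' : Matrix (Fin k) (Fin k) C}
    (h : S.map δ = T.map γ) (h' : S'.map δ = T'.map γ) (h1 : S * S' = 1) (h2 : T * T' = 1) :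
    pairMatrix S T h * pairMatrix S' T' h' = 1 := by
  ext i j
  · have := congrFun (congrFun h1 i) j
    by_cases hij : i = j <;>
      simpa [Matrix.mul_apply, pairMatrix, Matrix.one_apply, hij, Prod.fst_sum] using this
  · have := congrFun (congrFun h2 i) j
    by_cases hij : i = j <;>
      simpa [Matrix.mul_apply, pairMatrix, Matrix.one_apply, hij, Prod.snd_sum] using this

theorem pairMatrix_isUnit {S : Matrix (Fin k) (Fin k) B} {T : Matrix (Fin k) (Fin k) C}
    (h : S.map δ = T.map γ) (hS : IsUnit S) (hT : IsUnit T) : IsUnit (pairMatrix S T h) := by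
  obtain ⟨S', s1, s2⟩ := isUnit_iff_exists.mp hS
  obtain ⟨T', t1, t2⟩ := isUnit_iff_exists.mp hT
  have h' : S'.map δ = T'.map γ := by
    have e1 : S'.map δ * S.map δ = 1 := by rw [← Matrix.map_mul, s2]; simp
    have e2 : T.map γ * T'.map γ = 1 := by rw [← Matrix.map_mul, t1]; simp
    exact left_inv_eq_right_inv e1 (h ▸ e2)
  exact isUnit_iff_exists.mpr
    ⟨pairMatrix S' T' h', pairMatrix_mul h h' s1 t1, pairMatrix_mul h' h s2 t2⟩

/-- Transitivity over the pullback: lift last columns to invertible matrices over `B` and `C`,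
then adjust one of them, on the side of the surjection, so that their images over `D` agree. -/
theorem pullback_GLtrans (hsurj : Function.Surjective γ ∨ Function.Surjective δ)
    (hD : ∀ x : GLs k D, Joined x (GLone k D))
    (hB : GLtrans (k + 1) B) (hC : GLtrans (k + 1) C) :
    GLtrans (k + 1) (pullbackAlg δ γ) := by
  refine GLtrans_of_orbit fun v hv => ?_
  obtain ⟨w, hw⟩ := hv
  have hw1 : ∑ i, (w i).1.1 * (v i).1.1 = 1 := by
    simpa [Prod.fst_sum] using congrArg (fun a : pullbackAlg δ γ => a.1.1) hw
  have hw2 : ∑ i, (w i).1.2 * (v i).1.2 = 1 := by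
    simpa [Prod.snd_sum] using congrArg (fun a : pullbackAlg δ γ => a.1.2) hw
  obtain ⟨S, hS, hSv⟩ := hB _ lastVec_mem_Lg (fun i => (v i).1.1) ⟨_, hw1⟩
  obtain ⟨T, hT, hTv⟩ := hC _ lastVec_mem_Lg (fun i => (v i).1.2) ⟨_, hw2⟩
  have hcol : δ ∘ S.mulVec (lastVec k B) = γ ∘ T.mulVec (lastVec k C) := by
    rw [hSv, hTv]; exact funext fun i => (v i).2
  obtain ⟨S', T', hS', hT', hSv', hTv', hST⟩ : ∃ (S' : Matrix (Fin (k + 1)) (Fin (k + 1)) B)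
      (T' : Matrix (Fin (k + 1)) (Fin (k + 1)) C), IsUnit S' ∧ IsUnit T' ∧
      S'.mulVec (lastVec k B) = S.mulVec (lastVec k B) ∧
      T'.mulVec (lastVec k C) = T.mulVec (lastVec k C) ∧ S'.map δ = T'.map γ := by
    rcases hsurj with hγ | hδ
    · obtain ⟨T', h1, h2, h3⟩ := exists_adjust γ hγ hD hT
        (isUnit_matrix_map (δ : B →+* D) hS)
        ((map_mulVec_lastVec (δ : B →+* D) S).trans hcol)
      exact ⟨S, T', hS, h1, rfl, h2, h3.symm⟩
    · obtain ⟨S', h1, h2, h3⟩ := exists_adjust δ hδ hD hS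
        (isUnit_matrix_map (γ : C →+* D) hT)
        ((map_mulVec_lastVec (γ : C →+* D) T).trans hcol.symm)
      exact ⟨S', T, h1, hT, h2, rfl, h3⟩
  refine ⟨pairMatrix S' T' hST, pairMatrix_isUnit hST hS' hT', ?_⟩
  funext i
  rw [mulVec_lastVec_apply]
  refine Subtype.ext (Prod.ext ?_ ?_)
  · exact (mulVec_lastVec_apply S' i).symm.trans (congrFun (hSv'.trans hSv) i)
  · exact (mulVec_lastVec_apply T' i).symm.trans (congrFun (hTv'.trans hTv) i)

end Pullback

/-- **Theorem.** For a pullback `A = B ⊕_D C` of unital C*-algebras along `δ : B → D`,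
`γ : C → D` with `γ` or `δ` surjective, if `K_1(D) = 0` then
`gsr(A) ≤ max {gsr(B), gsr(C), inj_0(D)}`. -/
theorem gsr_pullback_le_of_K1_zero {B C D : Type*}
    [CStarAlgebra B] [CStarAlgebra C] [CStarAlgebra D]
    (δ : B →⋆ₐ[ℂ] D) (γ : C →⋆ₐ[ℂ] D)
    (hsurj : Function.Surjective γ ∨ Function.Surjective δ)
    (hK1 : ∀ k : ℕ, 1 ≤ k → ∀ h : GLs k D,
      ∃ m : ℕ, stabIter m h ∈ connectedComponent (GLone (k + m) D)) :
    gsr ↥(pullbackAlg δ γ) ≤ max (gsr B) (max (gsr C) (injRank 0 D)) := by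
  rcases eq_or_ne (max (gsr B) (max (gsr C) (injRank 0 D))) ⊤ with htop | htop
  · rw [htop]; exact le_top
  obtain ⟨N, hN⟩ := ENat.ne_top_iff_exists.mp htop
  rw [← hN]
  obtain ⟨h1, hB⟩ := of_sInf_le (s := 0) (P := fun m => GLtrans m B)
    ((le_max_left _ _).trans hN.ge)
  obtain ⟨-, hC⟩ := of_sInf_le (s := 0) (P := fun m => GLtrans m C)
    (((le_max_left _ _).trans (le_max_right _ _)).trans hN.ge)
  obtain ⟨-, hinj⟩ := of_sInf_le (s := 1) (P := fun m => pikInj 0 D m)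
    (((le_max_right _ _).trans (le_max_right _ _)).trans hN.ge)
  refine sInf_le ⟨N, rfl, h1, fun m hm => ?_⟩
  obtain ⟨k, rfl⟩ : ∃ k, m = k + 1 := ⟨m - 1, by omega⟩
  refine pullback_GLtrans hsurj (fun x => ?_) (hB _ hm) (hC _ hm)
  rcases Nat.eq_zero_or_pos k with rfl | hk
  -- `K_1(D) = 0` speaks of sizes `k ≥ 1`; `GL_0(D)` is a single point
  · rw [Subsingleton.elim x (GLone 0 D)]
  · obtain ⟨j, hj⟩ := hK1 k hk x
    rw [← pathComponent_eq_connectedComponent] at hj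
    exact joined_of_stabIter (fun m hkm => hinj m (by omega)) x j (Joined.symm hj)

end
end

section
/- For every unital C*-algebra D, max{inj_0(D), surj_1(D)} ≤ csr(𝕋D) (as elements of ℕ ∪ {∞}), where 𝕋D = C(𝕋, D). That is, if m ≥ csr(C(𝕋, D)) then the map π_0(GL_{m-1}(D)) → π_0(GL_m(D)) induced by the stabilization map θ_D is injective and the map π_1(GL_{m-1}(D)) → π_1(GL_m(D)) (fundamental groups at the identity matrices) is surjective. -/
/-! The theorem reflects the fibration `GL_{m+1}(D) → Lg_{m+1}(D)`, `M ↦ M e` with `e` the last basis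
vector: its fibre over `e` consists of the block matrices `[P 0; r 1]` and is homotopy equivalent to
`GL_m(D)`, so the obstruction to both claims is `π_1(Lg_{m+1}(D))`, and loops in `Lg_{m+1}(D)` are
points of `Lg_{m+1}(C(𝕋, D))`. The argument below makes this explicit without the long exact
sequence.

* If `Lg_n(B)` is connected for a Banach algebra `B`, the identity component of `GL_n(B)` acts
  transitively on it (`exists_joined_mulVec`), because the orbits are open: when `u v = 1`, the
  matrix `1 + (w - v) u` takes `v` to `w` and is near `1` for `w` near `v`.
* Let `γ` be a path in `GL_{m+1}(D)` with ends in the image of `GL_m(D)`. Its last column is a loop,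
  that is, a left unimodular vector over `C(𝕋, D)`. Transitivity gives a path in
  `GL_{m+1}(C(𝕋, D))` from `1` to a matrix taking this vector to `e`; normalized to be `1` at the
  base point of the circle, it deforms `γ` with fixed ends to a path whose last column is constantly
  `e` (`exists_correction`).
* The straightened path has the form `[P_t 0; r_t 1]` with `P_t` invertible. If `γ` joins
  `diag(a, 1)` to `diag(b, 1)`, then `P` joins `a` to `b`, which is injectivity on `π_0`
  (`pikInj_zero`). If `γ` is a loop at `1`, scaling `r` to zero deforms it to the stabilization of
  the loop `P`, which is surjectivity on `π_1` (`pikSurj_one`).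
-/


open scoped unitInterval

noncomputable section

section Helpers

open Topology Matrix

/-! ### The identity component of `GL_n(B)` acting on `Lg_n(B)` -/

/-- Mathlib's result for complete normed rings, transported to the product topology on matrices,
which is the one induced by the `ℓ^∞` operator norm. -/
theorem isOpenEmbedding_unitsVal {n : ℕ} {B : Type*} [NormedRing B] [CompleteSpace B] :
    IsOpenEmbedding (Units.val : (Matrix (Fin n) (Fin n) B)ˣ → Matrix (Fin n) (Fin n) B) := by
  let R : NormedRing (Matrix (Fin n) (Fin n) B) := Matrix.linftyOpNormedRing
  have : @CompleteSpace _ R.toMetricSpace.toPseudoMetricSpace.toUniformSpace :=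
    inferInstanceAs (CompleteSpace (Fin n → Fin n → B))
  exact Units.isOpenEmbedding_val

/-- If `u v = 1`, then `1 + (w - v) u` sends `v` to `w`. For `w` close to `v` it is invertible, and
so is every matrix on the segment joining it to `1`. -/
theorem eventually_joined_mulVec {n : ℕ} {B : Type*} [NormedRing B] [NormedAlgebra ℂ B]
    [CompleteSpace B] {v : Fin n → B} (hv : v ∈ Lg n B) :
    ∀ᶠ w in 𝓝 v, ∃ U : (Matrix (Fin n) (Fin n) B)ˣ, Joined 1 U ∧ U.val *ᵥ v = w := by
  obtain ⟨u, hu⟩ := hv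
  set f : (Fin n → B) → I → Matrix (Fin n) (Fin n) B :=
    fun w s => 1 + ((s : ℝ) : ℂ) • vecMulVec (w - v) u with hf
  have hfc : Continuous fun p : (Fin n → B) × I => f p.1 p.2 := by
    refine continuous_matrix fun i j => ?_
    simp only [hf, Matrix.add_apply, Matrix.smul_apply, vecMulVec_apply, Pi.sub_apply]
    fun_prop
  have hopen : IsOpen {M : Matrix (Fin n) (Fin n) B | IsUnit M} := by
    have := (isOpenEmbedding_unitsVal (n := n) (B := B)).isOpen_range
    exact this
  have hev : ∀ᶠ w in 𝓝 v, ∀ s ∈ (Set.univ : Set I), IsUnit (f w s) := by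
    refine isCompact_univ.eventually_forall_of_forall_eventually fun s _ => ?_
    refine hfc.continuousAt.preimage_mem_nhds (hopen.mem_nhds ?_)
    simp [hf]
  filter_upwards [hev] with w hw
  have hw' : ∀ s, IsUnit (f w s) := fun s => hw s trivial
  refine ⟨(hw' 1).unit, ⟨⟨⟨fun s => (hw' s).unit, ?_⟩, ?_, ?_⟩⟩, ?_⟩
  · refine isOpenEmbedding_unitsVal.isEmbedding.continuous_iff.mpr ?_
    exact hfc.comp (by fun_prop : Continuous fun s : I => (w, s))
  · ext1
    simp [hf]
  · rfl
  · have : u ⬝ᵥ v = 1 := hu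
    simp [hf, add_mulVec, vecMulVec_mulVec, this]

/-- When `Lg_n(B)` is connected, the identity component of `GL_n(B)` acts transitively on it. -/
theorem exists_joined_mulVec {n : ℕ} {B : Type*} [NormedRing B] [NormedAlgebra ℂ B]
    [CompleteSpace B] (hc : IsConnected (Lg n B)) {v w : Fin n → B} (hv : v ∈ Lg n B)
    (hw : w ∈ Lg n B) :
    ∃ U : (Matrix (Fin n) (Fin n) B)ˣ, Joined 1 U ∧ U.val *ᵥ v = w := by
  refine hc.isPreconnected.induction₂
    (fun v w => ∃ U : (Matrix (Fin n) (Fin n) B)ˣ, Joined 1 U ∧ U.val *ᵥ v = w)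
    (fun x hx => (eventually_joined_mulVec hx).filter_mono nhdsWithin_le_nhds) ?_ ?_ hv hw
  · rintro x y z - - - ⟨U, hU, rfl⟩ ⟨V, hV, rfl⟩
    refine ⟨V * U, ?_, by simp [mulVec_mulVec]⟩
    simpa using hV.mul hU
  · rintro x y - - ⟨U, hU, rfl⟩
    refine ⟨U⁻¹, by simpa using hU.inv, ?_⟩
    rw [mulVec_mulVec, Units.inv_mul, one_mulVec]

/-! ### Loops as functions on the circle -/

/-- The parametrization `t ↦ exp (2π i t)` of the circle by the unit interval. -/
def circleParam : C(I, Circle) :=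
  ⟨fun t => Circle.exp (2 * Real.pi * t), by fun_prop⟩

theorem circleParam_surjective : Function.Surjective circleParam := by
  intro z
  obtain ⟨x, rfl⟩ := Circle.exp_surjective z
  obtain ⟨y, hy, hxy⟩ := Circle.periodic_exp.exists_mem_Ico₀ Real.two_pi_pos x
  have hp := Real.two_pi_pos
  refine ⟨⟨y / (2 * Real.pi), by have := hy.1; positivity, ?_⟩, ?_⟩
  · rw [div_le_one hp]; exact hy.2.le
  · simp only [circleParam, ContinuousMap.coe_mk]
    rw [mul_div_cancel₀ _ hp.ne', hxy]

theorem circleParam_eq {s t : I} (h : circleParam s = circleParam t) :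
    s = t ∨ (s = 0 ∧ t = 1) ∨ (s = 1 ∧ t = 0) := by
  obtain ⟨k, hk⟩ := Circle.exp_eq_exp.mp h
  have hp := Real.two_pi_pos
  have hst : (s : ℝ) = t + k := by
    have : 2 * Real.pi * (s : ℝ) = 2 * Real.pi * (t + k) := by linarith
    exact mul_left_cancel₀ hp.ne' this
  have h1 : (k : ℝ) ≤ 1 := by linarith [s.2.2, t.2.1]
  have h2 : (-1 : ℝ) ≤ k := by linarith [s.2.1, t.2.2]
  have h1' : k ≤ 1 := by exact_mod_cast h1
  have h2' : -1 ≤ k := by exact_mod_cast h2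
  have hk3 : k = 0 ∨ k = -1 ∨ k = 1 := by omega
  rcases hk3 with rfl | rfl | rfl
  · left; ext; simpa using hst
  · right; left
    push_cast at hst
    exact ⟨Subtype.ext (show (s : ℝ) = 0 by linarith [s.2.1, t.2.2]),
      Subtype.ext (show (t : ℝ) = 1 by linarith [s.2.1, t.2.2])⟩
  · right; right
    push_cast at hst
    exact ⟨Subtype.ext (show (s : ℝ) = 1 by linarith [s.2.2, t.2.1]),
      Subtype.ext (show (t : ℝ) = 0 by linarith [s.2.2, t.2.1])⟩

theorem circleParam_one : circleParam 1 = circleParam 0 := by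
  refine Circle.exp_eq_exp.mpr ⟨1, by simp⟩

/-- A path with equal end points factors through the circle. -/
theorem exists_circle_lift {X : Type*} [TopologicalSpace X] (f : C(I, X)) (h : f 0 = f 1) :
    ∃ g : C(Circle, X), ∀ t, g (circleParam t) = f t := by
  have hq : IsQuotientMap circleParam :=
    IsQuotientMap.of_surjective_continuous circleParam_surjective circleParam.continuous
  have hf : Function.FactorsThrough f circleParam := by
    intro s t hst
    rcases circleParam_eq hst with rfl | ⟨rfl, rfl⟩ | ⟨rfl, rfl⟩
    exacts [rfl, h, h.symm]
  refine ⟨hq.lift f hf, fun t => ?_⟩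
  exact DFunLike.congr_fun (hq.lift_comp f hf) t

/-! ### Straightening the last column of a path -/

/-- Evaluation at a point of the circle, on invertible matrices. -/
def evalUnits (n : ℕ) (D : Type*) [CStarAlgebra D] (z : Circle) :
    (Matrix (Fin n) (Fin n) C(Circle, D))ˣ →* (Matrix (Fin n) (Fin n) D)ˣ :=
  Units.map (RingHom.mapMatrix
    ((Pi.evalRingHom (fun _ : Circle => D) z).comp ContinuousMap.coeFnRingHom)).toMonoidHom

theorem evalUnits_apply {n : ℕ} {D : Type*} [CStarAlgebra D] (z : Circle)
    (U : (Matrix (Fin n) (Fin n) C(Circle, D))ˣ) (i j : Fin n) :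
    (evalUnits n D z U).val i j = U.val i j z := rfl

/-- Let `γ` be a path in `GL_{m+1}(D)` whose two ends have the last column of the identity, and
whose inverse has the last row of the identity at both ends. Then `γ` is homotopic, with fixed ends,
to a path whose last column is constantly that of the identity; the homotopy is `H (s, t) * γ t`.
The condition on the rows makes the last row of `γ⁻¹` a function on the circle, which witnesses that
the last column of `γ` is a left unimodular vector over `C(𝕋, D)`. -/
theorem exists_correction {m : ℕ} {D : Type*} [CStarAlgebra D]
    (hc : IsConnected (Lg (m + 1) C(Circle, D)))
    (γ : C(I, (Matrix (Fin (m + 1)) (Fin (m + 1)) D)ˣ))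
    (hcol : ∀ i t, t = 0 ∨ t = 1 →
      (γ t).val i (Fin.last m) = (1 : Matrix (Fin (m + 1)) (Fin (m + 1)) D) i (Fin.last m))
    (hrow : ∀ j t, t = 0 ∨ t = 1 →
      ((γ t)⁻¹).val (Fin.last m) j = (1 : Matrix (Fin (m + 1)) (Fin (m + 1)) D) (Fin.last m) j) :
    ∃ H : C(I × I, (Matrix (Fin (m + 1)) (Fin (m + 1)) D)ˣ),
      (∀ t, H (0, t) = 1) ∧ (∀ s, H (s, 0) = 1) ∧ (∀ s, H (s, 1) = 1) ∧
      ∀ t i, (H (1, t) * γ t).val i (Fin.last m) =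
        (1 : Matrix (Fin (m + 1)) (Fin (m + 1)) D) i (Fin.last m) := by
  have hv : ∀ i, ∃ g : C(Circle, D), ∀ t, g (circleParam t) = (γ t).val i (Fin.last m) := by
    intro i
    refine exists_circle_lift ⟨fun t => (γ t).val i (Fin.last m), ?_⟩ ?_
    · exact (Units.continuous_val.comp γ.continuous).matrix_elem _ _
    · simp [hcol]
  have hw : ∀ j, ∃ g : C(Circle, D), ∀ t,
      g (circleParam t) = ((γ t)⁻¹).val (Fin.last m) j := by
    intro j
    refine exists_circle_lift ⟨fun t => ((γ t)⁻¹).val (Fin.last m) j, ?_⟩ ?_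
    · exact (Units.continuous_val.comp γ.continuous.inv).matrix_elem _ _
    · have h0 := hrow j 0 (Or.inl rfl)
      have h1 := hrow j 1 (Or.inr rfl)
      exact h0.trans h1.symm
  choose v hv using hv
  choose w hw using hw
  have hvL : v ∈ Lg (m + 1) C(Circle, D) := by
    refine ⟨w, ?_⟩
    ext z
    obtain ⟨t, rfl⟩ := circleParam_surjective z
    have := congrFun (congrFun (Units.inv_mul (γ t)) (Fin.last m)) (Fin.last m)
    rw [Matrix.mul_apply] at this
    simpa [hv, hw] using this
  have heL : (fun i => (1 : Matrix (Fin (m + 1)) (Fin (m + 1)) C(Circle, D)) i (Fin.last m)) ∈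
      Lg (m + 1) C(Circle, D) := by
    refine ⟨fun i => (1 : Matrix (Fin (m + 1)) (Fin (m + 1)) C(Circle, D)) (Fin.last m) i, ?_⟩
    rw [← Matrix.mul_apply]; simp
  obtain ⟨U, ⟨Γ⟩, hU⟩ := exists_joined_mulVec hc hvL heL
  -- `E (s, t)` is the value of `Γ s` at the point of the circle with parameter `t`.
  let E : C(I × I, (Matrix (Fin (m + 1)) (Fin (m + 1)) D)ˣ) :=
    ⟨fun p => evalUnits (m + 1) D (circleParam p.2) (Γ p.1), by
      refine isOpenEmbedding_unitsVal.isEmbedding.continuous_iff.mpr ?_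
      refine continuous_matrix fun i j => ?_
      simp only [Function.comp_apply, evalUnits_apply]
      have h1 : Continuous fun p : I × I => (Γ p.1).val i j :=
        (Units.continuous_val.comp (Γ.continuous.comp continuous_fst)).matrix_elem i j
      exact h1.eval (circleParam.continuous.comp continuous_snd)⟩
  have hE0 : ∀ t, E (0, t) = 1 := fun t => by simp [E]
  have hE1 : ∀ t i, (E (1, t) * γ t).val i (Fin.last m) =
      (1 : Matrix (Fin (m + 1)) (Fin (m + 1)) D) i (Fin.last m) := by
    intro t i
    have := DFunLike.congr_fun (congrFun hU i) (circleParam t)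
    have h2 : ((1 : Matrix (Fin (m + 1)) (Fin (m + 1)) C(Circle, D)) i (Fin.last m))
        (circleParam t) = (1 : Matrix (Fin (m + 1)) (Fin (m + 1)) D) i (Fin.last m) := by
      by_cases h : i = Fin.last m <;> simp [Matrix.one_apply, h]
    rw [h2] at this
    rw [← this, Units.val_mul, Matrix.mul_apply]
    simp [mulVec, dotProduct, E, evalUnits_apply, hv]
  have hEs : ∀ s, E (s, 1) = E (s, 0) := fun s => by simp [E, circleParam_one]
  -- The factor `(E (s, 0))⁻¹` makes the correction trivial at the base point of the circle.
  refine ⟨⟨fun p => (E (p.1, 0))⁻¹ * E p, by fun_prop⟩, ?_, ?_, ?_, ?_⟩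
  · intro t; simp [hE0]
  · intro s; simp
  · intro s; simp [hEs]
  · intro t i
    -- At `t = 0` the matrix `E (1, 0)` fixes the last basis vector, hence so does its inverse.
    have hcomp : ∀ i, (E (1, 0)).val i (Fin.last m) =
        (1 : Matrix (Fin (m + 1)) (Fin (m + 1)) D) i (Fin.last m) := by
      intro i
      rw [← hE1 0 i, Units.val_mul, Matrix.mul_apply]
      simp [hcol, Matrix.one_apply]
    have key : ((E (1, 0))⁻¹ * (E (1, t) * γ t)).val i (Fin.last m) =
        ((E (1, 0))⁻¹ * E (1, 0)).val i (Fin.last m) := by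
      rw [Units.val_mul, Units.val_mul _ (E (1, 0)), Matrix.mul_apply, Matrix.mul_apply]
      exact Finset.sum_congr rfl fun k _ => by rw [hE1, hcomp]
    rw [inv_mul_cancel] at key
    simpa [mul_assoc] using key


/-! ### Matrices with the last column of the identity -/

section Blocks

variable {m : ℕ} {D : Type*} [Ring D]

/-- The upper left `m × m` block of an `(m + 1) × (m + 1)` matrix. -/
def topBlock (M : Matrix (Fin (m + 1)) (Fin (m + 1)) D) : Matrix (Fin m) (Fin m) D :=
  M.submatrix Fin.castSucc Fin.castSucc

theorem stab_castSucc_castSucc (P : Matrix (Fin m) (Fin m) D) (i j : Fin m) :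
    stab P i.castSucc j.castSucc = P i j := by
  change (Matrix.fromBlocks P 0 0 1) (finSumFinEquiv.symm (Fin.castAdd 1 i))
    (finSumFinEquiv.symm (Fin.castAdd 1 j)) = _
  simp

theorem stab_castSucc_last (P : Matrix (Fin m) (Fin m) D) (i : Fin m) :
    stab P i.castSucc (Fin.last m) = 0 := by
  change (Matrix.fromBlocks P 0 0 1) (finSumFinEquiv.symm (Fin.castAdd 1 i))
    (finSumFinEquiv.symm (Fin.natAdd m 0)) = _
  simp

theorem stab_last_castSucc (P : Matrix (Fin m) (Fin m) D) (j : Fin m) :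
    stab P (Fin.last m) j.castSucc = 0 := by
  change (Matrix.fromBlocks P 0 0 1) (finSumFinEquiv.symm (Fin.natAdd m 0))
    (finSumFinEquiv.symm (Fin.castAdd 1 j)) = _
  simp

theorem stab_last_last (P : Matrix (Fin m) (Fin m) D) :
    stab P (Fin.last m) (Fin.last m) = 1 := by
  change (Matrix.fromBlocks P 0 0 1) (finSumFinEquiv.symm (Fin.natAdd m 0))
    (finSumFinEquiv.symm (Fin.natAdd m 0)) = _
  simp

theorem stab_col (P : Matrix (Fin m) (Fin m) D) (i : Fin (m + 1)) :
    stab P i (Fin.last m) = (1 : Matrix (Fin (m + 1)) (Fin (m + 1)) D) i (Fin.last m) := by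
  rw [← stab_one (n := m)]
  refine Fin.lastCases ?_ (fun i => ?_) i
  · rw [stab_last_last, stab_last_last]
  · rw [stab_castSucc_last, stab_castSucc_last]

theorem stab_row (P : Matrix (Fin m) (Fin m) D) (j : Fin (m + 1)) :
    stab P (Fin.last m) j = (1 : Matrix (Fin (m + 1)) (Fin (m + 1)) D) (Fin.last m) j := by
  rw [← stab_one (n := m)]
  refine Fin.lastCases ?_ (fun i => ?_) j
  · rw [stab_last_last, stab_last_last]
  · rw [stab_last_castSucc, stab_last_castSucc]

theorem topBlock_stab (P : Matrix (Fin m) (Fin m) D) : topBlock (stab P) = P := by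
  ext i j
  exact stab_castSucc_castSucc P i j

/-- The inverse of `stab P` is `stab P⁻¹`, so its last row is that of the identity. -/
theorem stab_inv_row {U : (Matrix (Fin (m + 1)) (Fin (m + 1)) D)ˣ} {P : Matrix (Fin m) (Fin m) D}
    (hP : IsUnit P) (hU : U.val = stab P) (j : Fin (m + 1)) :
    (U⁻¹).val (Fin.last m) j =
      (1 : Matrix (Fin (m + 1)) (Fin (m + 1)) D) (Fin.last m) j := by
  obtain ⟨V, rfl⟩ := hP
  have : (U⁻¹).val = stab (V⁻¹).val := by
    rw [Units.inv_eq_of_mul_eq_one_right]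
    rw [hU, stab_mul, Units.mul_inv, stab_one]
  rw [this, stab_row]

/-- A matrix whose last column is that of the identity is block lower triangular, so its upper
left block is multiplicative in it. -/
theorem topBlock_mul {M N : Matrix (Fin (m + 1)) (Fin (m + 1)) D}
    (hM : ∀ i, M i (Fin.last m) = (1 : Matrix (Fin (m + 1)) (Fin (m + 1)) D) i (Fin.last m)) :
    topBlock M * topBlock N = topBlock (M * N) := by
  ext i j
  have h0 : M i.castSucc (Fin.last m) = 0 := by
    rw [hM, Matrix.one_apply_ne (Fin.castSucc_lt_last i).ne]
  simp [topBlock, Matrix.mul_apply, Fin.sum_univ_castSucc, h0]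

/-- The inverse of a block lower triangular matrix with lower right entry `1` has the same shape,
so the upper left blocks of `M` and `M⁻¹` are inverse to each other. -/
theorem isUnit_topBlock {M : Matrix (Fin (m + 1)) (Fin (m + 1)) D} (h : IsUnit M)
    (hM : ∀ i, M i (Fin.last m) = (1 : Matrix (Fin (m + 1)) (Fin (m + 1)) D) i (Fin.last m)) :
    IsUnit (topBlock M) := by
  obtain ⟨U, rfl⟩ := h
  have hinv : ∀ i, (U⁻¹).val i (Fin.last m) =
      (1 : Matrix (Fin (m + 1)) (Fin (m + 1)) D) i (Fin.last m) := by
    intro i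
    rw [← Units.inv_mul U, Matrix.mul_apply]
    simp [hM, Matrix.one_apply]
  have h1 : topBlock (1 : Matrix (Fin (m + 1)) (Fin (m + 1)) D) = 1 := by
    rw [← stab_one, topBlock_stab]
  refine isUnit_iff_exists.mpr ⟨topBlock (U⁻¹).val, ?_, ?_⟩
  · rw [topBlock_mul hM, Units.mul_inv, h1]
  · rw [topBlock_mul hinv, Units.inv_mul, h1]

/-- If `M` is invertible with last column that of the identity, the segment from
`stab (topBlock M)` to `M` consists of invertible matrices: it only rescales the part of the last
row below the upper left block. With `E` the difference and `V = stab (topBlock M)`, the point at parameter `c`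
is `(1 + c E V⁻¹) V`, and `E V⁻¹` squares to zero. -/
theorem isUnit_segment [Module ℂ D] [SMulCommClass ℂ D D] [IsScalarTower ℂ D D]
    {M : Matrix (Fin (m + 1)) (Fin (m + 1)) D} (h : IsUnit M)
    (hM : ∀ i, M i (Fin.last m) = (1 : Matrix (Fin (m + 1)) (Fin (m + 1)) D) i (Fin.last m))
    (c : ℂ) : IsUnit (stab (topBlock M) + c • (M - stab (topBlock M))) := by
  obtain ⟨V, hV⟩ := stab_isUnit (isUnit_topBlock h hM)
  set E := M - stab (topBlock M) with hE
  have hcol : ∀ i, E i (Fin.last m) = 0 := fun i => by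
    rw [hE, Matrix.sub_apply, hM, stab_col, sub_self]
  have hrow : ∀ (i : Fin m) j, E i.castSucc j = 0 := fun i j => by
    refine Fin.lastCases (hcol _) (fun j => ?_) j
    rw [hE, Matrix.sub_apply, stab_castSucc_castSucc]
    exact sub_self _
  have hVcol : ∀ i, (V⁻¹).val i (Fin.last m) =
      (1 : Matrix (Fin (m + 1)) (Fin (m + 1)) D) i (Fin.last m) := by
    intro i
    rw [← Units.inv_mul V, Matrix.mul_apply]
    simp [hV, stab_col, Matrix.one_apply]
  have hsq : E * (V⁻¹).val * E = 0 := by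
    rw [mul_assoc]
    ext i j
    rw [Matrix.mul_apply, Fin.sum_univ_castSucc]
    have : ∀ k : Fin m, ((V⁻¹).val * E) k.castSucc j = 0 := fun k => by
      rw [Matrix.mul_apply, Fin.sum_univ_castSucc, hVcol,
        Matrix.one_apply_ne (Fin.castSucc_lt_last k).ne]
      simp [hrow]
    simp [hcol, this]
  have hnil : IsNilpotent (c • (E * (V⁻¹).val)) := by
    refine ⟨2, ?_⟩
    rw [pow_two, smul_mul_smul_comm, ← mul_assoc, hsq, zero_mul, smul_zero]
  have hfac : stab (topBlock M) + c • E = (1 + c • (E * (V⁻¹).val)) * V.val := by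
    rw [add_mul, one_mul, smul_mul_assoc, mul_assoc, Units.inv_mul, mul_one, hV]
  rw [hfac]
  exact hnil.isUnit_one_add.mul V.isUnit

end Blocks

/-! ### Injectivity on `π_0` and surjectivity on `π_1` -/

theorem continuous_topBlock {m : ℕ} {D : Type*} [Ring D] [TopologicalSpace D] :
    Continuous fun M : Matrix (Fin (m + 1)) (Fin (m + 1)) D => topBlock M :=
  continuous_id.matrix_submatrix _ _

/-- The identification of the subspace of invertible matrices with the unit group. -/
def unitsOfGLs (n : ℕ) (D : Type*) [CStarAlgebra D] :
    C(GLs n D, (Matrix (Fin n) (Fin n) D)ˣ) :=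
  ⟨fun M => M.2.unit, isOpenEmbedding_unitsVal.isEmbedding.continuous_iff.mpr
    continuous_subtype_val⟩

theorem unitsOfGLs_val {n : ℕ} {D : Type*} [CStarAlgebra D] (M : GLs n D) :
    (unitsOfGLs n D M).val = M.1 := rfl

/-- A path from `diag(a, 1)` to `diag(b, 1)` can be straightened to have constant last column; its
upper left block is then a path of invertible matrices from `a` to `b`. -/
theorem pikInj_zero {m : ℕ} {D : Type*} [CStarAlgebra D]
    (hc : IsConnected (Lg (m + 1) C(Circle, D))) : pikInj 0 D m := by
  rintro a b ⟨F⟩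
  let x : Fin 0 → I := default
  let γ : C(I, (Matrix (Fin (m + 1)) (Fin (m + 1)) D)ˣ) :=
    ⟨fun s => unitsOfGLs (m + 1) D (F (s, x)), by fun_prop⟩
  have h0 : (γ 0).val = stab (a.1 x).1 := congrArg Subtype.val (F.apply_zero x)
  have h1 : (γ 1).val = stab (b.1 x).1 := congrArg Subtype.val (F.apply_one x)
  obtain ⟨H, -, H0, H1, hH⟩ := exists_correction hc γ
    (by rintro i t (rfl | rfl)
        · rw [h0, stab_col]
        · rw [h1, stab_col])
    (by rintro i t (rfl | rfl)
        · exact stab_inv_row (a.1 x).2 h0 i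
        · exact stab_inv_row (b.1 x).2 h1 i)
  let G : C(I × (Fin 0 → I), GLs m D) :=
    ⟨fun p => ⟨topBlock (H (1, p.1) * γ p.1).val,
        isUnit_topBlock (Units.isUnit _) (hH p.1)⟩, by
      refine Continuous.subtype_mk (continuous_topBlock.comp (Units.continuous_val.comp ?_)) _
      fun_prop⟩
  refine ⟨⟨⟨G, fun y => ?_, fun y => ?_⟩, fun t y hy => ?_⟩⟩
  · obtain rfl : y = x := Subsingleton.elim _ _
    refine Subtype.ext ?_
    change topBlock (H (1, 0) * γ 0).val = _
    rw [H0, one_mul, h0, topBlock_stab]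
  · obtain rfl : y = x := Subsingleton.elim _ _
    refine Subtype.ext ?_
    change topBlock (H (1, 1) * γ 1).val = _
    rw [H1, one_mul, h1, topBlock_stab]
  · exact hy.elim fun i => i.elim0

/-- A loop `b` is straightened to a loop `c` with constant last column, which contracts linearly
onto the stabilization of its upper left block `a`. -/
theorem pikSurj_one {m : ℕ} {D : Type*} [CStarAlgebra D]
    (hc : IsConnected (Lg (m + 1) C(Circle, D))) : pikSurj 1 D m := by
  intro b
  let γ : C(I, (Matrix (Fin (m + 1)) (Fin (m + 1)) D)ˣ) :=
    ⟨fun t => unitsOfGLs (m + 1) D (b.1 fun _ => t), by fun_prop⟩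
  have hγ : ∀ t, t = 0 ∨ t = 1 → γ t = 1 := by
    intro t ht
    refine Units.ext ?_
    exact congrArg Subtype.val (b.2 (fun _ => t) ⟨0, ht⟩)
  have hγb : ∀ y : Fin 1 → I, (γ (y 0)).val = (b.1 y).1 := by
    intro y
    have : (fun _ => y 0) = y := by ext i; rw [Subsingleton.elim i 0]
    simp only [γ, ContinuousMap.coe_mk, this, unitsOfGLs_val]
  obtain ⟨H, H00, H0, H1, hH⟩ := exists_correction hc γ
    (by intro i t ht; rw [hγ t ht, Units.val_one])
    (by intro i t ht; rw [hγ t ht, inv_one, Units.val_one])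
  have hHb : ∀ s t, t = 0 ∨ t = 1 → H (s, t) * γ t = 1 := by
    intro s t ht
    rw [hγ t ht, mul_one]
    rcases ht with rfl | rfl
    exacts [H0 s, H1 s]
  -- `M` is the straightened path.
  let M : I → Matrix (Fin (m + 1)) (Fin (m + 1)) D := fun t => (H (1, t) * γ t).val
  have hMc : Continuous M := Units.continuous_val.comp (by fun_prop)
  have hMu : ∀ t, IsUnit (M t) := fun t => Units.isUnit _
  have hM1 : ∀ t, t = 0 ∨ t = 1 → M t = 1 := fun t ht => by
    simp only [M, hHb 1 t ht, Units.val_one]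
  have hT1 : ∀ t, t = 0 ∨ t = 1 → topBlock (M t) = 1 := fun t ht => by
    rw [hM1 t ht, ← stab_one, topBlock_stab]
  have hbd : ∀ y ∈ Cube.boundary (Fin 1), y 0 = 0 ∨ y 0 = 1 := by
    rintro y ⟨i, hi⟩
    rwa [Subsingleton.elim i 0] at hi
  let a : GenLoop (Fin 1) (GLs m D) (GLone m D) :=
    ⟨⟨fun y => ⟨topBlock (M (y 0)), isUnit_topBlock (hMu _) (hH _)⟩,
      Continuous.subtype_mk (continuous_topBlock.comp (by fun_prop)) _⟩,
      fun y hy => Subtype.ext (hT1 _ (hbd y hy))⟩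
  let c : GenLoop (Fin 1) (GLs (m + 1) D) (GLone (m + 1) D) :=
    ⟨⟨fun y => ⟨M (y 0), hMu _⟩, Continuous.subtype_mk (by fun_prop) _⟩,
      fun y hy => Subtype.ext (hM1 _ (hbd y hy))⟩
  have hbc : GenLoop.Homotopic b c := by
    let G : C(I × (Fin 1 → I), GLs (m + 1) D) :=
      ⟨fun p => ⟨(H (p.1, p.2 0) * γ (p.2 0)).val, Units.isUnit _⟩,
        Continuous.subtype_mk (Units.continuous_val.comp (by fun_prop)) _⟩
    refine ⟨⟨⟨G, fun y => ?_, fun y => rfl⟩, fun t y hy => ?_⟩⟩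
    · refine Subtype.ext ?_
      change (H (0, y 0) * γ (y 0)).val = (b.1 y).1
      rw [H00, one_mul, hγb]
    · refine Subtype.ext ?_
      change (H (t, y 0) * γ (y 0)).val = (b.1 y).1
      rw [hHb _ _ (hbd y hy), b.2 y hy]; rfl
  have hac : GenLoop.Homotopic (GenLoop.push (stabCM m D) stabCM_one a) c := by
    let G : C(I × (Fin 1 → I), GLs (m + 1) D) :=
      ⟨fun p => ⟨stab (topBlock (M (p.2 0))) +
          ((p.1 : ℝ) : ℂ) • (M (p.2 0) - stab (topBlock (M (p.2 0)))),
          isUnit_segment (hMu _) (hH _) _⟩, by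
        have h1 : Continuous fun p : I × (Fin 1 → I) => M (p.2 0) := by fun_prop
        have h2 : Continuous fun p : I × (Fin 1 → I) => stab (topBlock (M (p.2 0))) :=
          continuous_stab.comp (continuous_topBlock.comp h1)
        have h3 : Continuous fun p : I × (Fin 1 → I) => ((p.1 : ℝ) : ℂ) := by fun_prop
        exact Continuous.subtype_mk (h2.add (h3.smul (h1.sub h2))) _⟩
    refine ⟨⟨⟨G, fun y => ?_, fun y => ?_⟩, fun t y hy => ?_⟩⟩
    · refine Subtype.ext ?_
      change stab (topBlock (M (y 0))) +
          (((0 : I) : ℝ) : ℂ) • (M (y 0) - stab (topBlock (M (y 0)))) = stab (topBlock (M (y 0)))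
      simp
    · refine Subtype.ext ?_
      change stab (topBlock (M (y 0))) +
          (((1 : I) : ℝ) : ℂ) • (M (y 0) - stab (topBlock (M (y 0)))) = M (y 0)
      simp
    · refine Subtype.ext ?_
      change stab (topBlock (M (y 0))) +
          ((t : ℝ) : ℂ) • (M (y 0) - stab (topBlock (M (y 0)))) = stab (topBlock (M (y 0)))
      rw [hM1 _ (hbd y hy), ← stab_one, topBlock_stab, sub_self, smul_zero, add_zero]
  exact ⟨a, hac.trans hbc.symm⟩

/-- The infimum defining `csr` is attained whenever it is finite. -/
theorem isConnected_Lg_of_csr_le {A : Type*} [Ring A] [TopologicalSpace A] {m : ℕ}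
    (h : csr A ≤ m) : IsConnected (Lg m A) := by
  have hne : {N : ℕ∞ | ∃ n : ℕ, N = n ∧ 1 ≤ n ∧
      ∀ m : ℕ, n ≤ m → IsConnected (Lg m A)}.Nonempty := by
    by_contra hne
    rw [Set.not_nonempty_iff_eq_empty] at hne
    rw [csr, hne, sInf_empty] at h
    exact ENat.natCast_ne_top m (top_le_iff.mp h)
  obtain ⟨n, hn, -, hc⟩ := csInf_mem hne
  refine hc m ?_
  have : ((n : ℕ) : ℕ∞) ≤ m := by rw [← hn]; exact h
  exact_mod_cast this

end Helpers

/-- **Theorem.** For every unital C*-algebra `D`,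
`max {inj_0(D), surj_1(D)} ≤ csr(𝕋D)` where `𝕋D = C(𝕋, D)`: if `m ≥ csr(C(𝕋, D))`
then `π_0(GL_{m-1}(D)) → π_0(GL_m(D))` is injective and
`π_1(GL_{m-1}(D)) → π_1(GL_m(D))` is surjective. -/
theorem injRank_surjRank_le_csr_circle {D : Type*} [CStarAlgebra D] :
    max (injRank 0 D) (surjRank 1 D) ≤ csr (ContinuousMap Circle D) ∧
      ∀ m : ℕ, csr (ContinuousMap Circle D) ≤ (m + 1 : ℕ) → pikInj 0 D m ∧ pikSurj 1 D m := by
  have key : ∀ m : ℕ, csr (ContinuousMap Circle D) ≤ (m + 1 : ℕ) → pikInj 0 D m ∧ pikSurj 1 D m :=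
    fun m hm => ⟨pikInj_zero (isConnected_Lg_of_csr_le hm),
      pikSurj_one (isConnected_Lg_of_csr_le hm)⟩
  refine ⟨le_sInf ?_, key⟩
  rintro N ⟨n, rfl, hn, hc⟩
  have hle : csr (ContinuousMap Circle D) ≤ n := sInf_le ⟨n, rfl, hn, hc⟩
  have hle' : ∀ m : ℕ, n ≤ m + 1 → csr (ContinuousMap Circle D) ≤ (m + 1 : ℕ) :=
    fun m hm => hle.trans (by exact_mod_cast hm)
  exact max_le (sInf_le ⟨n, rfl, hn, fun m hm => (key m (hle' m hm)).1⟩)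
    (sInf_le ⟨n, rfl, hn, fun m hm => (key m (hle' m hm)).2⟩)

end
end

section
/- Let γ : C → D be a surjective unital *-homomorphism of unital C*-algebras and let n ≥ 1. Then γ has the path lifting property for invertibles: for every continuous path g : [0,1] → GL_n(D) and every S ∈ GL_n(C) with g(1) = γ(S), there exists a continuous path f : [0,1] → GL_n(C) such that f(1) = S and γ(f(t)) = g(t) for all t ∈ [0,1]. -/
/-!
Entrywise, `γ` is a continuous surjective homomorphism `φ : A → B` of the Banach algebras
`A = M_n(C)` and `B = M_n(D)`, and the lifting property holds for every such `φ`.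

By a partition of unity and successive approximation, composition with `φ` is a surjection
`C(I, A) → C(I, B)` (`compLeft_surjective`), so it is an open map by the open mapping theorem.
Since the units of a Banach algebra form an open set, the units of `C(I, B)` which lift to units
of `C(I, A)` form an open subgroup, which is therefore clopen and contains everything connected
to `1`. The path `g g(1)⁻¹` is connected to `1` by contracting the interval to its endpoint `1`,
so it has an invertible lift `v`; then `v v(1)⁻¹ S` is the required lift of `g`
(`exists_lift_units`).
-/

open scoped unitInterval

noncomputable section

/-- Applying a ring homomorphism entrywise to an invertible matrix. -/
def mapGLs {n : ℕ} {R S : Type*} [Ring R] [Ring S] (f : R →+* S) (M : GLs n R) : GLs n S :=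
  ⟨M.1.map f, M.2.map f.mapMatrix⟩


section BanachAlgebra

variable {X A B : Type*} [TopologicalSpace X] [CompactSpace X] [T2Space X]

/-- One step of the successive approximation: with `K` an open mapping constant for `φ`, a
partition of unity glues locally constant lifts of `b` into a continuous approximate lift whose
error is at most `‖b‖ / 2`. -/
theorem exists_approx_lift [NormedAddCommGroup A] [NormedSpace ℝ A]
    [NormedAddCommGroup B] [NormedSpace ℝ B] (φ : A →L[ℝ] B) {K : ℝ}
    (hK : ∀ y, ∃ x, φ x = y ∧ ‖x‖ ≤ K * ‖y‖) (hK0 : 0 < K) (b : C(X, B)) :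
    ∃ a : C(X, A), ‖a‖ ≤ K * ‖b‖ ∧ ‖b - φ.compLeftContinuous ℝ X a‖ ≤ 1 / 2 * ‖b‖ := by
  rcases eq_or_ne b 0 with rfl | hb
  · exact ⟨0, by simp⟩
  have hb' : 0 < ‖b‖ := norm_pos_iff.2 hb
  obtain ⟨a, ha⟩ := exists_continuous_forall_mem_convex_of_local_const
    (t := fun x => Metric.closedBall (0 : A) (K * ‖b‖) ∩
      φ ⁻¹' Metric.closedBall (b x) (1 / 2 * ‖b‖))
    (fun x => (convex_closedBall _ _).inter
      ((convex_closedBall _ _).linear_preimage φ.toLinearMap)) (fun x => by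
      obtain ⟨c, hc, hcn⟩ := hK (b x)
      refine ⟨c, ?_⟩
      have h1 : ∀ᶠ y in nhds x, dist (b y) (b x) < 1 / 2 * ‖b‖ :=
        Metric.tendsto_nhds.1 (b.continuous.tendsto x) _ (by positivity)
      filter_upwards [h1] with y hy
      refine ⟨?_, ?_⟩
      · rw [mem_closedBall_zero_iff]
        exact hcn.trans (mul_le_mul_of_nonneg_left (b.norm_coe_le_norm x) hK0.le)
      · rw [Set.mem_preimage, hc, Metric.mem_closedBall, dist_comm]
        exact hy.le)
  refine ⟨a, (ContinuousMap.norm_le _ (by positivity)).2 fun x => ?_,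
    (ContinuousMap.norm_le _ (by positivity)).2 fun x => ?_⟩
  · simpa using (ha x).1
  · have := (ha x).2
    rw [Set.mem_preimage, Metric.mem_closedBall, dist_comm, dist_eq_norm] at this
    exact this

/-- A continuous linear surjection of Banach spaces stays surjective on continuous functions
over a compact Hausdorff space: sum the successive approximate lifts of the errors. -/
theorem compLeft_surjective [NormedAddCommGroup A] [NormedSpace ℝ A] [CompleteSpace A]
    [NormedAddCommGroup B] [NormedSpace ℝ B] [CompleteSpace B] (φ : A →L[ℝ] B)
    (hφ : Function.Surjective φ) : Function.Surjective (φ.compLeftContinuous ℝ X) := by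
  obtain ⟨K, hK0, hK⟩ := φ.exists_preimage_norm_le hφ
  choose s hs1 hs2 using exists_approx_lift (X := X) φ hK hK0
  set T := φ.compLeftContinuous ℝ X
  intro b
  -- `r k` is the error left after `k` corrections
  let r : ℕ → C(X, B) := fun k => (fun e => e - T (s e))^[k] b
  have hr : ∀ k, r (k + 1) = r k - T (s (r k)) := fun k =>
    Function.iterate_succ_apply' _ _ _
  have hrn : ∀ k, ‖r k‖ ≤ (1 / 2) ^ k * ‖b‖ := by
    intro k
    induction k with
    | zero => simp [r]
    | succ k ih =>
      rw [hr, pow_succ']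
      linarith [hs2 (r k)]
  have hr0 : Filter.Tendsto r Filter.atTop (nhds 0) := by
    refine squeeze_zero_norm hrn ?_
    simpa using (tendsto_pow_atTop_nhds_zero_of_lt_one (r := (1 / 2 : ℝ))
      (by norm_num) (by norm_num)).mul_const ‖b‖
  have hsum : Summable fun k => s (r k) := by
    refine Summable.of_norm_bounded (g := fun k => (1 / 2 : ℝ) ^ k * (K * ‖b‖))
      (summable_geometric_two.mul_right _) fun k => ?_
    refine (hs1 _).trans ?_
    calc K * ‖r k‖ ≤ K * ((1 / 2) ^ k * ‖b‖) := mul_le_mul_of_nonneg_left (hrn k) hK0.le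
      _ = _ := by ring
  have hpart : ∀ k, T (∑ i ∈ Finset.range k, s (r i)) = b - r k := by
    intro k
    induction k with
    | zero => simp [r]
    | succ k ih => rw [Finset.sum_range_succ, map_add, ih, hr]; abel
  refine ⟨∑' k, s (r k), tendsto_nhds_unique
    ((T.continuous.tendsto _).comp hsum.hasSum.tendsto_sum_nat) ?_⟩
  simp only [Function.comp_def, hpart]
  simpa using hr0.const_sub b

/-- The path lifting property for units of Banach algebras. The units of `C(I, B)` that lift to
units of `C(I, A)` form an open, hence clopen, subgroup; the contraction `s ↦ g (max t s) g(1)⁻¹`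
joins `g g(1)⁻¹` to `1`, so `g g(1)⁻¹` lifts, and right translation by a constant fixes the
endpoint. -/
theorem exists_lift_units [NormedRing A] [NormedAlgebra ℝ A] [CompleteSpace A]
    [NormedRing B] [NormedAlgebra ℝ B] [CompleteSpace B] (φ : A →+* B)
    (hlin : ∀ (c : ℝ) x, φ (c • x) = c • φ x) (hc : Continuous φ)
    (hφ : Function.Surjective φ) (g : C(I, B)) (hg : ∀ t, IsUnit (g t)) (S : A)
    (hS : IsUnit S) (hgS : g 1 = φ S) :
    ∃ f : C(I, A), (∀ t, IsUnit (f t)) ∧ f 1 = S ∧ ∀ t, φ (f t) = g t := by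
  let φL : A →L[ℝ] B := ⟨⟨φ.toAddMonoidHom.toAddHom, hlin⟩, hc⟩
  let T : C(I, A) →+* C(I, B) := φ.compLeftContinuous I hc
  have hTopen : IsOpenMap T :=
    (φL.compLeftContinuous ℝ I).isOpenMap (compLeft_surjective φL hφ)
  let H : Subgroup C(I, B)ˣ := (Units.map (T : C(I, A) →* C(I, B))).range
  have hHopen : IsOpen (H : Set C(I, B)ˣ) := by
    have : (H : Set C(I, B)ˣ) = Units.val ⁻¹' (T '' {a | IsUnit a}) := by
      ext u
      constructor
      · rintro ⟨v, rfl⟩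
        exact ⟨v, v.isUnit, rfl⟩
      · rintro ⟨_, ⟨v, rfl⟩, hv⟩
        exact ⟨v, Units.ext hv⟩
    rw [this]
    exact (hTopen _ Units.isOpen).preimage Units.continuous_val
  obtain ⟨g1, hg1⟩ := hg 1
  -- the contraction of `g g(1)⁻¹` to the constant path `1`, first as a path in `C(I, B)`
  let P : C(I, C(I, B)) := ContinuousMap.curry
    ⟨fun p : I × I => g (max p.2 p.1) * (g1⁻¹ : Bˣ), by fun_prop⟩
  have hP : ∀ s, IsUnit (P s) := fun s =>
    (ContinuousMap.isUnit_iff_forall_isUnit _).2 fun t => (hg _).mul (g1⁻¹).isUnit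
  choose Q hQ using hP
  have hQc : Continuous Q := by
    rw [Units.isOpenEmbedding_val.isEmbedding.continuous_iff]
    exact P.continuous.congr fun s => (hQ s).symm
  have hQ1 : Q 1 = 1 := by
    refine Units.ext ?_
    rw [hQ]
    ext t
    have : max t (1 : I) = 1 := max_eq_right unitInterval.le_one'
    simp [P, this, ← hg1]
  have hmem : Q 0 ∈ H :=
    (isPreconnected_range hQc).subset_isClopen ⟨H.isClosed_of_isOpen hHopen, hHopen⟩
      ⟨1, ⟨1, hQ1⟩, H.one_mem⟩ ⟨0, rfl⟩
  obtain ⟨v, hv⟩ := hmem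
  have hvt : ∀ t, φ ((v : C(I, A)) t) = g t * (g1⁻¹ : Bˣ) := by
    intro t
    have h1 : T v = P 0 := by rw [← hQ, ← hv]; rfl
    have h2 : φ ((v : C(I, A)) t) = g (max t 0) * (g1⁻¹ : Bˣ) := congrArg (fun k => k t) h1
    rwa [max_eq_left unitInterval.nonneg'] at h2
  have hvu : ∀ t, IsUnit ((v : C(I, A)) t) :=
    (ContinuousMap.isUnit_iff_forall_isUnit _).1 v.isUnit
  obtain ⟨v1, hv1⟩ := hvu 1
  have hφv1 : φ ((v1⁻¹ : Aˣ) : A) = 1 := by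
    have h1 : φ v1 = 1 := by rw [hv1, hvt, ← hg1, Units.mul_inv]
    have h2 : φ (v1 * (v1⁻¹ : Aˣ)) = 1 := by rw [Units.mul_inv, map_one]
    rwa [map_mul, h1, one_mul] at h2
  refine ⟨⟨fun t => (v : C(I, A)) t * ((v1⁻¹ : Aˣ) * S), by fun_prop⟩, fun t =>
    (hvu t).mul ((v1⁻¹).isUnit.mul hS), ?_, fun t => ?_⟩
  · simp [← hv1]
  · change φ ((v : C(I, A)) t * ((v1⁻¹ : Aˣ) * S)) = g t
    rw [map_mul, map_mul, hvt, hφv1, one_mul, ← hgS, ← hg1, mul_assoc, Units.inv_mul, mul_one]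

end BanachAlgebra

/-- The uniformity of the `ℓ^∞` operator norm is by definition the entrywise one. -/
theorem completeSpace_linftyOp (n : ℕ) (R : Type*) [NormedRing R] [CompleteSpace R] :
    @CompleteSpace (Matrix (Fin n) (Fin n) R)
      (Matrix.linftyOpNormedRing.toMetricSpace.toUniformSpace) :=
  Matrix.instCompleteSpace (Fin n) (Fin n) R

/-- **Theorem.** A surjective unital *-homomorphism `γ : C → D` has the path lifting
property for invertibles: any path `g : [0,1] → GL_n(D)` with `g(1) = γ(S)` lifts to a
path `f : [0,1] → GL_n(C)` with `f(1) = S` and `γ ∘ f = g`. -/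
theorem path_lifting_invertibles {C D : Type*} [CStarAlgebra C] [CStarAlgebra D]
    (γ : C →⋆ₐ[ℂ] D) (hγ : Function.Surjective γ) (n : ℕ) (hn : 1 ≤ n)
    (g : ContinuousMap I (GLs n D)) (S : GLs n C)
    (hgS : g 1 = mapGLs (γ : C →+* D) S) :
    ∃ f : ContinuousMap I (GLs n C),
      f 1 = S ∧ ∀ t : I, mapGLs (γ : C →+* D) (f t) = g t := by
  -- the `ℓ^∞` operator norm makes matrices a Banach algebra with the entrywise topology
  let := Matrix.linftyOpNormedRing (n := Fin n) (α := C)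
  let := Matrix.linftyOpNormedRing (n := Fin n) (α := D)
  let : NormedAlgebra ℝ (Matrix (Fin n) (Fin n) C) := Matrix.linftyOpNormedAlgebra
  let : NormedAlgebra ℝ (Matrix (Fin n) (Fin n) D) := Matrix.linftyOpNormedAlgebra
  have := completeSpace_linftyOp n C
  have := completeSpace_linftyOp n D
  have hγc : Continuous γ := AddMonoidHomClass.continuous_of_bound γ 1 fun x => by
    simpa using NonUnitalStarAlgHom.norm_apply_le γ x
  obtain ⟨f, hfu, hf1, hf⟩ := exists_lift_units (γ : C →+* D).mapMatrix
    (fun c M => by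
      ext i j
      exact map_real_smul γ hγc c (M i j))
    (continuous_id.matrix_map hγc)
    (fun M => by
      choose s hs using hγ
      refine ⟨M.map s, ?_⟩
      ext i j
      exact hs _)
    (⟨fun t => (g t).1, continuous_subtype_val.comp g.continuous⟩)
    (fun t => (g t).2) S.1 S.2 (congrArg Subtype.val hgS)
  exact ⟨⟨fun t => ⟨f t, hfu t⟩, f.continuous.subtype_mk _⟩, Subtype.ext hf1,
    fun t => Subtype.ext (hf t)⟩

end
end

section
/- Let (X, x0) be a pointed compact Hausdorff space and A a unital C*-algebra. Let ΣX denote the reduced suspension of X. Then gsr(C(ΣX, A)) = max{gsr(A), inj_X(A)} (as elements of ℕ ∪ {∞}). -/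
/-!
The equality follows from a statement in each fixed size: `GL_{k+1}(C(ΣX, A))` acts transitively
on `Lg_{k+1}(C(ΣX, A))` if and only if `GL_{k+1}(A)` acts transitively on `Lg_{k+1}(A)` and
`[X, GL_k(A)]_* → [X, GL_{k+1}(A)]_*` is injective. Let `e` be the last basis vector. The map
`GL_{k+1}(A) → Lg_{k+1}(A)`, `M ↦ M e`, has fibre over `e` the matrices `[[N, 0], [c, 1]]`,
which deform to `GL_k(A)`.

* Given transitivity over `ΣX`, evaluation at a point gives transitivity over `A`
  (`GLtrans_base`). If `F` is a based homotopy from `diag(f, 1)` to `diag(g, 1)`, then `F e` is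
  a unimodular vector over `C(ΣX, A)`, hence equal to `M e` with `M` invertible over `C(ΣX, A)`
  and `M = 1` at the base point. So `M⁻¹ F` fixes `e`, and its corner is a based homotopy from
  `f` to `g` (`basedInjAt_of_GLtrans`).
* Conversely, constant matrices reduce to a vector `v` over `C(ΣX, A)` with value `e` at the base
  point. Path lifting (`exists_path_lift`, resting on the rank-one formula `rankOne_isUnit`)
  writes `v = V e` on `[0,1] × X`, where `V` is `1` on `{0} × X` and on `[0,1] × {x0}`. On
  `{1} × X` the matrix `V` fixes `e`, so after clearing its last row it is a based nullhomotopy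
  of `diag(N, 1)` for some `N : X → GL_k(A)`. Injectivity gives a based nullhomotopy `H` of `N`,
  and `V diag(H, 1)⁻¹` descends to `ΣX` and still carries `e` to `v` (`exists_of_based`).

Matrices over `C(Y, A)` are compared with continuous matrix-valued functions on `Y` by pointwise
evaluation; they are invertible exactly when they are so pointwise, since inversion is
continuous on `GL_n(A)`.
-/

open scoped unitInterval

noncomputable section

/-- The gluing relation defining the reduced suspension `ΣX`. -/
def suspRel (X : Type*) (x0 : X) : I × X → I × X → Prop := fun a b =>
  (a.1 = 0 ∧ b = (0, x0)) ∨ (a.1 = 1 ∧ b = (1, x0)) ∨ (a.2 = x0 ∧ b = (0, x0))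

/-- The reduced suspension of a pointed space. -/
abbrev Susp (X : Type*) [TopologicalSpace X] (x0 : X) : Type _ :=
  Quot (suspRel X x0)

/-- Injectivity of the stabilization map `[X, GL_m(A)]_* → [X, GL_{m+1}(A)]_*` on based
homotopy classes. -/
def basedInjAt (X : Type*) [TopologicalSpace X] (x0 : X) (A : Type*) [Ring A]
    [TopologicalSpace A] (m : ℕ) : Prop :=
  ∀ f g : ContinuousMap X (GLs m A), f x0 = GLone m A → g x0 = GLone m A →
    ContinuousMap.HomotopicRel ((stabCM m A).comp f) ((stabCM m A).comp g) {x0} →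
      ContinuousMap.HomotopicRel f g {x0}

/-- `inj_X(A)`: the least `n ≥ 1` such that `[X, GL_{m-1}(A)]_* → [X, GL_m(A)]_*` is
injective for all `m ≥ n` (and `∞` if no such `n` exists). -/
def injXRank (X : Type*) [TopologicalSpace X] (x0 : X) (A : Type*) [Ring A]
    [TopologicalSpace A] : ℕ∞ :=
  sInf {N : ℕ∞ | ∃ n : ℕ, N = n ∧ 1 ≤ n ∧ ∀ m : ℕ, n ≤ m + 1 → basedInjAt X x0 A m}


/-! ### Matrices over algebras of continuous functions -/

section Pointwise

variable {Y : Type*} [TopologicalSpace Y] {A : Type*} [CStarAlgebra A]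

/-- Evaluation of a continuous `A`-valued function at a point, as a ring homomorphism. -/
def evC (y : Y) : ContinuousMap Y A →+* A where
  toFun f := f y
  map_one' := rfl
  map_mul' _ _ := rfl
  map_zero' := rfl
  map_add' _ _ := rfl

/-- Entrywise evaluation of a matrix of continuous functions at a point. -/
def evM {n : ℕ} (y : Y) :
    Matrix (Fin n) (Fin n) (ContinuousMap Y A) →+* Matrix (Fin n) (Fin n) A :=
  (evC y).mapMatrix

/-- A continuous matrix-valued function, regarded as a matrix of continuous functions. -/
def ofFun {n : ℕ} (f : Y → Matrix (Fin n) (Fin n) A) (hf : Continuous f) :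
    Matrix (Fin n) (Fin n) (ContinuousMap Y A) :=
  Matrix.of fun i j => ⟨fun y => f y i j, hf.matrix_elem i j⟩

theorem evM_ofFun {n : ℕ} (f : Y → Matrix (Fin n) (Fin n) A) (hf : Continuous f) (y : Y) :
    evM y (ofFun f hf) = f y := rfl

theorem evM_ext {n : ℕ} {M N : Matrix (Fin n) (Fin n) (ContinuousMap Y A)}
    (h : ∀ y, evM y M = evM y N) : M = N := by
  ext i j y
  exact congrFun (congrFun (h y) i) j

theorem continuous_evM {n : ℕ} (M : Matrix (Fin n) (Fin n) (ContinuousMap Y A)) :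
    Continuous fun y => evM y M :=
  continuous_matrix fun i j => (M i j).continuous

theorem evM_mulVec {n : ℕ} (M : Matrix (Fin n) (Fin n) (ContinuousMap Y A))
    (v : Fin n → ContinuousMap Y A) (y : Y) :
    (fun i => (M.mulVec v) i y) = (evM y M).mulVec fun i => v i y := by
  funext i
  exact RingHom.map_mulVec (evC y) M v i

/-- Inversion is continuous on `GL_n(A)`: the matrix algebra is a Banach algebra for the
`ℓ^∞` operator norm, whose topology is the entrywise one. -/
theorem continuous_ringInverse {n : ℕ} {f : Y → Matrix (Fin n) (Fin n) A}
    (hf : Continuous f) (hu : ∀ y, IsUnit (f y)) : Continuous fun y => Ring.inverse (f y) := by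
  let _ : NormedRing (Matrix (Fin n) (Fin n) A) := Matrix.linftyOpNormedRing
  have _ : @CompleteSpace (Matrix (Fin n) (Fin n) A) PseudoMetricSpace.toUniformSpace :=
    inferInstanceAs (CompleteSpace (Fin n → Fin n → A))
  rw [continuous_iff_continuousAt]
  intro y
  obtain ⟨u, hu⟩ := hu y
  have h := NormedRing.inverse_continuousAt u
  rw [hu] at h
  exact ContinuousAt.comp (f := f) h hf.continuousAt

theorem isUnit_of_evM {n : ℕ} {M : Matrix (Fin n) (Fin n) (ContinuousMap Y A)}
    (h : ∀ y, IsUnit (evM y M)) : IsUnit M := by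
  refine isUnit_iff_exists.mpr
    ⟨ofFun _ (continuous_ringInverse (continuous_evM M) h), evM_ext fun y => ?_,
      evM_ext fun y => ?_⟩
  · rw [map_mul, evM_ofFun, map_one, Ring.mul_inverse_cancel _ (h y)]
  · rw [map_mul, evM_ofFun, map_one, Ring.inverse_mul_cancel _ (h y)]

end Pointwise

/-! ### Moving a unimodular vector along a path -/

section Lifting

/-- If `w v = 1` and `w u` is invertible, then `1 + (u - v) w` is an invertible matrix
carrying `v` to `u`. -/
theorem rankOne_isUnit {R : Type*} [Ring R] {n : ℕ} {u v w : Fin n → R}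
    (hv : w ⬝ᵥ v = 1) (hu : IsUnit (w ⬝ᵥ u)) :
    IsUnit (1 + Matrix.vecMulVec (u - v) w) ∧
      (1 + Matrix.vecMulVec (u - v) w).mulVec v = u := by
  constructor
  · obtain ⟨c, hc⟩ := hu
    have hp : w ⬝ᵥ (u - v) = c.val - 1 := by rw [dotProduct_sub, hv, hc]
    have key : ∀ x : Fin n → R, Matrix.vecMulVec (u - v) w * Matrix.vecMulVec (u - v) x =
        Matrix.vecMulVec (u - v) ((c.val - 1) • x) := by
      intro x
      rw [Matrix.vecMulVec_mul_vecMulVec, hp]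
    have key' : Matrix.vecMulVec (u - v) (c⁻¹.val • w) * Matrix.vecMulVec (u - v) w =
        Matrix.vecMulVec (u - v) ((c⁻¹.val * (c.val - 1)) • w) := by
      rw [Matrix.vecMulVec_mul_vecMulVec, smul_dotProduct, hp, smul_eq_mul]
    refine isUnit_iff_exists.mpr
      ⟨1 - Matrix.vecMulVec (u - v) (c⁻¹.val • w), ?_, ?_⟩
    · rw [mul_sub, mul_one, add_mul, one_mul, key, smul_smul, sub_mul, Units.mul_inv, one_mul,
        sub_smul, one_smul, Matrix.vecMulVec_sub]
      abel
    · rw [mul_add, mul_one, sub_mul, one_mul, key', mul_sub, Units.inv_mul, mul_one, sub_smul,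
        one_smul, Matrix.vecMulVec_sub]
      abel
  · rw [Matrix.add_mulVec, Matrix.one_mulVec, Matrix.vecMulVec_mulVec, hv]
    simp

variable {Y : Type*} [TopologicalSpace Y] [CompactSpace Y] {A : Type*} [CStarAlgebra A]

/-- Path lifting for `GL_n → Lg_n`: a path of unimodular vectors over `C(Y, A)` which is
constant over `Z ⊆ Y` is followed by an invertible matrix which is the identity over `Z`. -/
theorem exists_path_lift {n : ℕ} (Z : Set Y) (γ w : I → Fin n → ContinuousMap Y A)
    (hγ : ∀ i, Continuous fun s => γ s i)
    (hw : ∀ s, w s ⬝ᵥ γ s = 1)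
    (hZ : ∀ s s' i, ∀ y ∈ Z, γ s i y = γ s' i y) :
    ∃ M : Matrix (Fin n) (Fin n) (ContinuousMap Y A), IsUnit M ∧
      M.mulVec (γ 0) = γ 1 ∧ ∀ y ∈ Z, evM y M = 1 := by
  let P : I → I → Prop := fun s s' =>
    ∃ M : Matrix (Fin n) (Fin n) (ContinuousMap Y A), IsUnit M ∧
      M.mulVec (γ s) = γ s' ∧ ∀ y ∈ Z, evM y M = 1
  have htrans : IsTrans I P := ⟨by
    rintro a b c ⟨M, hM, hMv, hMZ⟩ ⟨N, hN, hNv, hNZ⟩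
    refine ⟨N * M, hN.mul hM, ?_, fun y hy => ?_⟩
    · rw [← Matrix.mulVec_mulVec, hMv, hNv]
    · rw [map_mul, hMZ y hy, hNZ y hy, one_mul]⟩
  have hsymm : Std.Symm P := ⟨by
    rintro a b ⟨M, hM, hMv, hMZ⟩
    obtain ⟨u, rfl⟩ := hM
    refine ⟨u⁻¹.val, u⁻¹.isUnit, ?_, fun y hy => ?_⟩
    · rw [← hMv, Matrix.mulVec_mulVec, Units.inv_mul, Matrix.one_mulVec]
    · have h : evM y u.val * evM y u⁻¹.val = 1 := by rw [← map_mul, Units.mul_inv, map_one]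
      rwa [hMZ y hy, one_mul] at h⟩
  have hloc : ∀ s, ∀ᶠ s' in nhds s, P s s' := by
    intro s
    have hc : Continuous fun s' => w s ⬝ᵥ γ s' :=
      continuous_finsetSum _ fun i _ => continuous_const.mul (hγ i)
    have hopen : ∀ᶠ s' in nhds s, IsUnit (w s ⬝ᵥ γ s') := by
      refine (Units.isOpen.preimage hc).mem_nhds ?_
      show IsUnit (w s ⬝ᵥ γ s)
      rw [hw s]
      exact isUnit_one
    filter_upwards [hopen] with s' hs'
    obtain ⟨h1, h2⟩ := rankOne_isUnit (hw s) hs'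
    refine ⟨_, h1, h2, fun y hy => ?_⟩
    have h0 : evM y (Matrix.vecMulVec (γ s' - γ s) (w s)) = 0 := by
      ext i j
      show (γ s' i y - γ s i y) * w s j y = 0
      rw [hZ s' s i y hy, sub_self, zero_mul]
    rw [map_add, map_one, h0, add_zero]
  exact PreconnectedSpace.induction₂ P hloc htrans 0 1

end Lifting

/-! ### The stabilizer of the last basis vector -/

section Stabilizer

variable {A : Type*} [CStarAlgebra A] {k : ℕ}

/-- The last standard basis column. -/
def eL (k : ℕ) (A : Type*) [Ring A] : Fin (k + 1) → A := Pi.single (Fin.last k) 1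

/-- The matrix `[[N, 0], [c, 1]]`; these are the matrices fixing the last basis vector. -/
def lowBlk {R : Type*} [Ring R] (N : Matrix (Fin k) (Fin k) R) (c : Matrix (Fin 1) (Fin k) R) :
    Matrix (Fin (k + 1)) (Fin (k + 1)) R :=
  (Matrix.fromBlocks N 0 c 1).submatrix finSumFinEquiv.symm finSumFinEquiv.symm

/-- The upper left `k × k` corner. -/
def corner (T : Matrix (Fin (k + 1)) (Fin (k + 1)) A) : Matrix (Fin k) (Fin k) A :=
  (T.submatrix finSumFinEquiv finSumFinEquiv).toBlocks₁₁

/-- The last row, without its final entry. -/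
def lastRow (T : Matrix (Fin (k + 1)) (Fin (k + 1)) A) : Matrix (Fin 1) (Fin k) A :=
  (T.submatrix finSumFinEquiv finSumFinEquiv).toBlocks₂₁

theorem stab_eq_lowBlk (N : Matrix (Fin k) (Fin k) A) : stab N = lowBlk N 0 := rfl

theorem lowBlk_mul (N N' : Matrix (Fin k) (Fin k) A) (c c' : Matrix (Fin 1) (Fin k) A) :
    lowBlk N c * lowBlk N' c' = lowBlk (N * N') (c * N' + c') := by
  rw [lowBlk, lowBlk, lowBlk, Matrix.submatrix_mul_equiv, Matrix.fromBlocks_multiply]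
  simp

theorem lowBlk_one_zero : lowBlk (1 : Matrix (Fin k) (Fin k) A) 0 = 1 := stab_one

theorem isUnit_lowBlk_one (c : Matrix (Fin 1) (Fin k) A) :
    IsUnit (lowBlk (1 : Matrix (Fin k) (Fin k) A) c) :=
  isUnit_iff_exists.mpr ⟨lowBlk 1 (-c), by rw [lowBlk_mul]; simp [lowBlk_one_zero],
    by rw [lowBlk_mul]; simp [lowBlk_one_zero]⟩

theorem corner_lowBlk (N : Matrix (Fin k) (Fin k) A) (c : Matrix (Fin 1) (Fin k) A) :
    corner (lowBlk N c) = N := by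
  ext i j
  simp [corner, lowBlk, Matrix.toBlocks₁₁]

theorem corner_stab (N : Matrix (Fin k) (Fin k) A) : corner (stab N) = N := corner_lowBlk N 0

theorem corner_one : corner (1 : Matrix (Fin (k + 1)) (Fin (k + 1)) A) = 1 := by
  rw [← stab_one, corner_stab]

theorem lastRow_one : lastRow (1 : Matrix (Fin (k + 1)) (Fin (k + 1)) A) = 0 := by
  ext i j
  exact Matrix.one_apply_ne fun h => by simpa using finSumFinEquiv.injective h

theorem mulVec_eL (T : Matrix (Fin (k + 1)) (Fin (k + 1)) A) (i : Fin (k + 1)) :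
    T.mulVec (eL k A) i = T i (Fin.last k) := by
  simp [eL]

theorem lowBlk_mulVec_eL (N : Matrix (Fin k) (Fin k) A) (c : Matrix (Fin 1) (Fin k) A) :
    (lowBlk N c).mulVec (eL k A) = eL k A := by
  funext i
  rw [mulVec_eL]
  have hl : Fin.last k = finSumFinEquiv (Sum.inr (0 : Fin 1)) := by ext; simp
  obtain ⟨i, rfl⟩ := finSumFinEquiv.surjective i
  rw [eL, hl, lowBlk, Matrix.submatrix_apply, Equiv.symm_apply_apply, Equiv.symm_apply_apply]
  rcases i with i | i
  · rw [Matrix.fromBlocks_apply₁₂, Pi.single_eq_of_ne fun h => by simpa using finSumFinEquiv.injective h]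
    rfl
  · have : i = 0 := Subsingleton.elim _ _
    subst this
    rw [Matrix.fromBlocks_apply₂₂, Pi.single_eq_same, Matrix.one_apply_eq]

theorem stab_mulVec_eL (N : Matrix (Fin k) (Fin k) A) : (stab N).mulVec (eL k A) = eL k A :=
  lowBlk_mulVec_eL N 0

theorem vecMul_eL_stab (N : Matrix (Fin k) (Fin k) A) :
    Matrix.vecMul (eL k A) (stab N) = eL k A := by
  funext j
  have hl : Fin.last k = finSumFinEquiv (Sum.inr (0 : Fin 1)) := by ext; simp
  rw [eL, Matrix.single_one_vecMul, Matrix.row_apply, hl]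
  obtain ⟨j, rfl⟩ := finSumFinEquiv.surjective j
  rw [stab, Matrix.submatrix_apply, Equiv.symm_apply_apply, Equiv.symm_apply_apply]
  rcases j with j | j
  · rw [Matrix.fromBlocks_apply₂₁,
      Pi.single_eq_of_ne fun h => by simpa using finSumFinEquiv.injective h]
    rfl
  · have : j = 0 := Subsingleton.elim _ _
    subst this
    rw [Matrix.fromBlocks_apply₂₂, Pi.single_eq_same, Matrix.one_apply_eq]

theorem eq_lowBlk {T : Matrix (Fin (k + 1)) (Fin (k + 1)) A}
    (hT : T.mulVec (eL k A) = eL k A) : T = lowBlk (corner T) (lastRow T) := by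
  have hl : Fin.last k = finSumFinEquiv (Sum.inr (0 : Fin 1)) := by ext; simp
  have hcol : ∀ i, T i (finSumFinEquiv (Sum.inr (0 : Fin 1))) =
      (Pi.single (finSumFinEquiv (Sum.inr (0 : Fin 1))) 1 : Fin (k + 1) → A) i := by
    intro i
    have h := congrFun hT i
    rwa [mulVec_eL, eL, hl] at h
  ext i j
  obtain ⟨i, rfl⟩ := finSumFinEquiv.surjective i
  obtain ⟨j, rfl⟩ := finSumFinEquiv.surjective j
  rw [lowBlk, Matrix.submatrix_apply, Equiv.symm_apply_apply, Equiv.symm_apply_apply]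
  rcases j with j | j
  · rcases i with i | i <;> rfl
  · have : j = 0 := Subsingleton.elim _ _
    subst this
    rw [hcol]
    rcases i with i | i
    · rw [Matrix.fromBlocks_apply₁₂, Pi.single_eq_of_ne fun h => by simpa using finSumFinEquiv.injective h]
      rfl
    · have : i = 0 := Subsingleton.elim _ _
      subst this
      rw [Matrix.fromBlocks_apply₂₂, Pi.single_eq_same, Matrix.one_apply_eq]

theorem inverse_mulVec {R : Type*} [Ring R] {n : ℕ} {T : Matrix (Fin n) (Fin n) R}
    (hT : IsUnit T) {v w : Fin n → R} (h : T.mulVec v = w) :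
    (Ring.inverse T).mulVec w = v := by
  rw [← h, Matrix.mulVec_mulVec, Ring.inverse_mul_cancel _ hT, Matrix.one_mulVec]

theorem isUnit_corner {T : Matrix (Fin (k + 1)) (Fin (k + 1)) A} (hu : IsUnit T)
    (hT : T.mulVec (eL k A) = eL k A) : IsUnit (corner T) := by
  have hS := inverse_mulVec hu hT
  have h : ∀ {P Q : Matrix (Fin (k + 1)) (Fin (k + 1)) A}, P.mulVec (eL k A) = eL k A →
      Q.mulVec (eL k A) = eL k A → P * Q = 1 → corner P * corner Q = 1 := by
    intro P Q hP hQ hPQ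
    rw [eq_lowBlk hP, eq_lowBlk hQ, lowBlk_mul] at hPQ
    rw [← corner_lowBlk (corner P * corner Q), hPQ, corner_one]
  exact isUnit_iff_exists.mpr ⟨_, h hT hS (Ring.mul_inverse_cancel _ hu),
    h hS hT (Ring.inverse_mul_cancel _ hu)⟩

theorem continuous_corner :
    Continuous (corner : Matrix (Fin (k + 1)) (Fin (k + 1)) A → Matrix (Fin k) (Fin k) A) :=
  continuous_matrix fun _ _ => continuous_id.matrix_elem _ _

theorem continuous_lastRow :
    Continuous (lastRow : Matrix (Fin (k + 1)) (Fin (k + 1)) A → Matrix (Fin 1) (Fin k) A) :=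
  continuous_matrix fun _ _ => continuous_id.matrix_elem _ _

theorem Continuous.lowBlk {Y : Type*} [TopologicalSpace Y] {N : Y → Matrix (Fin k) (Fin k) A}
    {c : Y → Matrix (Fin 1) (Fin k) A} (hN : Continuous N) (hc : Continuous c) :
    Continuous fun y => lowBlk (N y) (c y) :=
  (hN.matrix_fromBlocks continuous_const hc continuous_const).matrix_submatrix _ _

end Stabilizer

/-! ### Functions on the reduced suspension -/

section Suspension

variable {X : Type*} [TopologicalSpace X] {x0 : X}

/-- The quotient map `[0,1] × X → ΣX`. -/
def suspMk (x0 : X) : ContinuousMap (I × X) (Susp X x0) := ⟨Quot.mk _, continuous_quot_mk⟩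

/-- The base point of `ΣX`. -/
def suspPt (x0 : X) : Susp X x0 := suspMk x0 (0, x0)

theorem suspMk_zero (x : X) : suspMk x0 (0, x) = suspPt x0 :=
  Quot.sound (Or.inl ⟨rfl, rfl⟩)

theorem suspMk_base (t : I) : suspMk x0 (t, x0) = suspPt x0 :=
  Quot.sound (Or.inr (Or.inr ⟨rfl, rfl⟩))

theorem suspMk_one (x : X) : suspMk x0 (1, x) = suspPt x0 :=
  have h : suspMk x0 (1, x) = suspMk x0 (1, x0) := Quot.sound (Or.inr (Or.inl ⟨rfl, rfl⟩))
  h.trans (suspMk_base 1)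

/-- A map on `[0,1] × X` which is constant on the collapsed part descends to `ΣX`. -/
theorem exists_suspLift {Z : Type*} [TopologicalSpace Z] {f : I × X → Z} (hf : Continuous f)
    {z : Z} (h0 : ∀ x, f (0, x) = z) (h1 : ∀ x, f (1, x) = z) (hb : ∀ t, f (t, x0) = z) :
    ∃ g : Susp X x0 → Z, Continuous g ∧ ∀ p, g (suspMk x0 p) = f p := by
  have hr : ∀ a b, suspRel X x0 a b → f a = f b := by
    rintro ⟨t, x⟩ b (⟨h, rfl⟩ | ⟨h, rfl⟩ | ⟨h, rfl⟩)
    · obtain rfl : t = 0 := h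
      rw [h0, h0]
    · obtain rfl : t = 1 := h
      rw [h1, h1]
    · obtain rfl : x = x0 := h
      rw [hb, hb]
  exact ⟨Quot.lift f hr, continuous_quot_lift hr hf, fun _ => rfl⟩

end Suspension

/-! ### The two implications in a fixed size -/

section Transitivity

theorem Lg_mulVec {R : Type*} [Ring R] {n : ℕ} {M : Matrix (Fin n) (Fin n) R} (hM : IsUnit M)
    {v : Fin n → R} (hv : v ∈ Lg n R) : M.mulVec v ∈ Lg n R := by
  obtain ⟨w, hw⟩ := hv
  refine ⟨Matrix.vecMul w (Ring.inverse M), ?_⟩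
  show Matrix.vecMul w (Ring.inverse M) ⬝ᵥ M.mulVec v = 1
  rw [Matrix.dotProduct_mulVec, Matrix.vecMul_vecMul, Ring.inverse_mul_cancel _ hM,
    Matrix.vecMul_one]
  exact hw

theorem Lg_map {R S : Type*} [Ring R] [Ring S] (φ : R →+* S) {n : ℕ} {v : Fin n → R}
    (hv : v ∈ Lg n R) : (fun i => φ (v i)) ∈ Lg n S := by
  obtain ⟨w, hw⟩ := hv
  refine ⟨fun i => φ (w i), ?_⟩
  rw [← map_one φ, ← hw, map_sum]
  simp

theorem eL_mem_Lg (k : ℕ) (R : Type*) [Ring R] : eL k R ∈ Lg (k + 1) R :=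
  ⟨eL k R, show eL k R ⬝ᵥ eL k R = 1 by simp [eL]⟩

/-- Transitivity only has to be checked on the orbit of the last basis vector. -/
theorem GLtrans_of_eL {R : Type*} [Ring R] {k : ℕ}
    (h : ∀ v ∈ Lg (k + 1) R, ∃ M : Matrix (Fin (k + 1)) (Fin (k + 1)) R,
      IsUnit M ∧ M.mulVec (eL k R) = v) : GLtrans (k + 1) R := by
  intro v hv w hw
  obtain ⟨M, hM, hMv⟩ := h v hv
  obtain ⟨N, hN, hNw⟩ := h w hw
  exact ⟨N * Ring.inverse M, hN.mul hM.ringInverse, by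
    rw [← Matrix.mulVec_mulVec, inverse_mulVec hM hMv, hNw]⟩

/-- Transitivity passes to retracts of rings: vectors over `S` are pushed to `R` along `ψ`, and
the matrix relating them there is brought back along the retraction `φ`. -/
theorem GLtrans_of_retract {R S : Type*} [Ring R] [Ring S] (ψ : S →+* R) (φ : R →+* S)
    (hφ : ∀ s, φ (ψ s) = s) {n : ℕ} (h : GLtrans n R) : GLtrans n S := by
  intro v hv w hw
  obtain ⟨M, hM, hMv⟩ := h _ (Lg_map ψ hv) _ (Lg_map ψ hw)
  refine ⟨φ.mapMatrix M, hM.map _, ?_⟩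
  funext i
  have h1 := RingHom.map_mulVec φ M (fun i => ψ (v i)) i
  rw [hMv, hφ] at h1
  rw [h1]
  congr 1
  funext j
  exact (hφ _).symm

variable {X : Type*} [TopologicalSpace X] {x0 : X} {A : Type*} [CStarAlgebra A] {k : ℕ}

theorem eL_apply {Y : Type*} [TopologicalSpace Y] (y : Y) :
    (fun i => eL k (ContinuousMap Y A) i y) = eL k A := by
  funext i
  by_cases h : i = Fin.last k
  · subst h; simp [eL]
  · simp [eL, h]

theorem GLtrans_base (h : GLtrans (k + 1) (ContinuousMap (Susp X x0) A)) : GLtrans (k + 1) A :=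
  GLtrans_of_retract
    ({ toFun := fun a => ContinuousMap.const _ a
       map_one' := rfl
       map_mul' := fun _ _ => rfl
       map_zero' := rfl
       map_add' := fun _ _ => rfl } : A →+* ContinuousMap (Susp X x0) A)
    (evC (suspPt x0)) (fun _ => rfl) h

/-- If `GL_{k+1}(C(ΣX, A))` acts transitively, then `[X, GL_k(A)]_* → [X, GL_{k+1}(A)]_*` is
injective: the last column of a homotopy between stabilized maps is a unimodular vector over
`C(ΣX, A)`, and dividing the homotopy by a matrix with that last column leaves a homotopy
through matrices `[[N, 0], [c, 1]]`. -/
theorem basedInjAt_of_GLtrans (h : GLtrans (k + 1) (ContinuousMap (Susp X x0) A)) :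
    basedInjAt X x0 A k := by
  rintro f g hf hg ⟨F⟩
  let V : I × X → Matrix (Fin (k + 1)) (Fin (k + 1)) A := fun p => (F p).1
  have hVc : Continuous V := continuous_subtype_val.comp F.continuous
  have hVu : ∀ p, IsUnit (V p) := fun p => (F p).2
  have hV0 : ∀ x, V (0, x) = stab (f x).1 := fun x => congrArg Subtype.val (F.apply_zero x)
  have hV1 : ∀ x, V (1, x) = stab (g x).1 := fun x => congrArg Subtype.val (F.apply_one x)
  have hVb : ∀ t, V (t, x0) = 1 := fun t => by
    have h1 := congrArg Subtype.val (F.eq_fst t (Set.mem_singleton x0))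
    refine h1.trans ?_
    show stab (f x0).1 = 1
    rw [hf]
    exact stab_one
  have hInv : Continuous fun p => Ring.inverse (V p) := continuous_ringInverse hVc hVu
  have hIe : ∀ N : Matrix (Fin k) (Fin k) A, IsUnit N →
      Matrix.vecMul (eL k A) (Ring.inverse (stab N)) = eL k A := by
    intro N hN
    conv_lhs => rw [← vecMul_eL_stab N]
    rw [Matrix.vecMul_vecMul, Ring.mul_inverse_cancel _ (stab_isUnit hN), Matrix.vecMul_one]
  -- the last column of the homotopy, and the last row of its inverse, descend to `ΣX`
  obtain ⟨v, hvc, hv⟩ := exists_suspLift (x0 := x0) (f := fun p => (V p).mulVec (eL k A))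
    (z := eL k A) (hVc.matrix_mulVec continuous_const)
    (fun x => by simp only [hV0, stab_mulVec_eL])
    (fun x => by simp only [hV1, stab_mulVec_eL])
    (fun t => by simp only [hVb, Matrix.one_mulVec])
  obtain ⟨w, hwc, hw⟩ := exists_suspLift (x0 := x0)
    (f := fun p => Matrix.vecMul (eL k A) (Ring.inverse (V p)))
    (z := eL k A) (continuous_const.matrix_vecMul hInv)
    (fun x => by simp only [hV0, hIe _ (f x).2])
    (fun x => by simp only [hV1, hIe _ (g x).2])
    (fun t => by simp only [hVb, Ring.inverse_one, Matrix.vecMul_one])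
  let v' : Fin (k + 1) → ContinuousMap (Susp X x0) A :=
    fun i => ⟨fun q => v q i, (continuous_apply i).comp hvc⟩
  let w' : Fin (k + 1) → ContinuousMap (Susp X x0) A :=
    fun i => ⟨fun q => w q i, (continuous_apply i).comp hwc⟩
  have hv' : v' ∈ Lg (k + 1) (ContinuousMap (Susp X x0) A) := by
    refine ⟨w', ?_⟩
    ext q
    obtain ⟨p, rfl⟩ : ∃ p, suspMk x0 p = q := Quot.exists_rep q
    rw [ContinuousMap.sum_apply]
    show w (suspMk x0 p) ⬝ᵥ v (suspMk x0 p) = 1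
    rw [hv, hw, Matrix.dotProduct_mulVec, Matrix.vecMul_vecMul,
      Ring.inverse_mul_cancel _ (hVu p), Matrix.vecMul_one]
    simp [eL]
  obtain ⟨M, hM, hMv⟩ := h _ (eL_mem_Lg k _) _ hv'
  have hMu : ∀ q, IsUnit (evM q M) := fun q => hM.map (evM q)
  have hMe : ∀ p, (evM (suspMk x0 p) M).mulVec (eL k A) = (V p).mulVec (eL k A) := by
    intro p
    have h1 := evM_mulVec M (eL k _) (suspMk x0 p)
    rw [hMv, eL_apply] at h1
    rw [← h1, ← hv]
    rfl
  -- normalizing by the value of `M` at the base point makes the quotient based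
  let B := evM (suspPt x0) M
  have hB : IsUnit B := hMu _
  have hBe : B.mulVec (eL k A) = eL k A := by
    have h1 := hMe (0, x0)
    rwa [hVb, Matrix.one_mulVec] at h1
  let S : I × X → Matrix (Fin (k + 1)) (Fin (k + 1)) A := fun p =>
    B * (Ring.inverse (evM (suspMk x0 p) M) * V p)
  have hSc : Continuous S := continuous_const.mul
    ((continuous_ringInverse ((continuous_evM M).comp (suspMk x0).continuous)
      fun p => hMu _).mul hVc)
  have hSu : ∀ p, IsUnit (S p) := fun p => hB.mul ((hMu _).ringInverse.mul (hVu p))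
  have hSe : ∀ p, (S p).mulVec (eL k A) = eL k A := by
    intro p
    rw [← Matrix.mulVec_mulVec, ← Matrix.mulVec_mulVec, inverse_mulVec (hMu _) (hMe p), hBe]
  have hSV : ∀ p, suspMk x0 p = suspPt x0 → S p = V p := by
    intro p hp
    show B * (Ring.inverse (evM (suspMk x0 p) M) * V p) = V p
    rw [hp, ← mul_assoc, Ring.mul_inverse_cancel _ hB, one_mul]
  refine ⟨⟨⟨⟨fun p => ⟨corner (S p), isUnit_corner (hSu p) (hSe p)⟩,
    (continuous_corner.comp hSc).subtype_mk _⟩, fun x => ?_, fun x => ?_⟩, ?_⟩⟩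
  · refine Subtype.ext ?_
    show corner (S (0, x)) = (f x).1
    rw [hSV _ (suspMk_zero x), hV0, corner_stab]
  · refine Subtype.ext ?_
    show corner (S (1, x)) = (g x).1
    rw [hSV _ (suspMk_one x), hV1, corner_stab]
  · rintro t x rfl
    refine Subtype.ext ?_
    show corner (S (t, x)) = (f x).1
    rw [hSV _ (suspMk_base t), hVb, corner_one, hf]
    rfl

/-- A unimodular vector over `C(ΣX, A)` with value `e` at the base point lies in the orbit
of `e`. Path lifting gives `V : [0,1] × X → GL_{k+1}(A)` with last column the given vector,
and `V(1, ·)` takes values in matrices `[[N, 0], [c, 1]]`. So `V` is, up to clearing `c`, a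
based nullhomotopy of `diag(N, 1)`; a nullhomotopy of `N` then corrects `V` to a function
on `ΣX`. -/
theorem exists_of_based [CompactSpace X] (hinj : basedInjAt X x0 A k)
    {v : Fin (k + 1) → ContinuousMap (Susp X x0) A} (hv : v ∈ Lg (k + 1) _)
    (hvb : (fun i => v i (suspPt x0)) = eL k A) :
    ∃ M : Matrix (Fin (k + 1)) (Fin (k + 1)) (ContinuousMap (Susp X x0) A),
      IsUnit M ∧ M.mulVec (eL k _) = v := by
  obtain ⟨w, hw⟩ := hv
  let sc : ContinuousMap (I × (I × X)) (Susp X x0) :=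
    (suspMk x0).comp ⟨fun q => (q.1 * q.2.1, q.2.2), by fun_prop⟩
  let γ : I → Fin (k + 1) → ContinuousMap (I × X) A := fun s i => ((v i).comp sc).curry s
  let ω : I → Fin (k + 1) → ContinuousMap (I × X) A := fun s i => ((w i).comp sc).curry s
  obtain ⟨M0, hM0, hM0v, hM0Z⟩ := exists_path_lift {p : I × X | p.1 = 0 ∨ p.2 = x0} γ ω
    (fun i => ((v i).comp sc).curry.continuous)
    (fun s => by
      ext p
      have h1 := congrArg (fun c : ContinuousMap (Susp X x0) A => c (sc (s, p))) hw
      simp only [ContinuousMap.sum_apply] at h1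
      rw [dotProduct, ContinuousMap.sum_apply]
      exact h1)
    (by
      rintro s s' i ⟨t, x⟩ (h | h)
      · obtain rfl : t = 0 := h
        show v i (suspMk x0 (s * 0, x)) = v i (suspMk x0 (s' * 0, x))
        rw [mul_zero, mul_zero]
      · obtain rfl : x = x0 := h
        show v i (suspMk x (s * t, x)) = v i (suspMk x (s' * t, x))
        rw [suspMk_base, suspMk_base])
  let V : I × X → Matrix (Fin (k + 1)) (Fin (k + 1)) A := fun p => evM p M0
  have hVc : Continuous V := continuous_evM M0
  have hVu : ∀ p, IsUnit (V p) := fun p => hM0.map (evM p)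
  have hV0 : ∀ x, V (0, x) = 1 := fun x => hM0Z _ (Or.inl rfl)
  have hVb : ∀ t, V (t, x0) = 1 := fun t => hM0Z _ (Or.inr rfl)
  have hVe : ∀ p, (V p).mulVec (eL k A) = fun i => v i (suspMk x0 p) := by
    intro p
    have h1 := evM_mulVec M0 (γ 0) p
    rw [hM0v] at h1
    have h2 : (fun i => γ 0 i p) = eL k A := by
      rw [← hvb]
      funext i
      show v i (suspMk x0 (0 * p.1, p.2)) = _
      rw [zero_mul, suspMk_zero]
    rw [h2] at h1
    rw [← h1]
    funext i
    show v i (suspMk x0 (1 * p.1, p.2)) = _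
    rw [one_mul]
  have hV1e : ∀ x, (V (1, x)).mulVec (eL k A) = eL k A := by
    intro x
    rw [hVe, suspMk_one, hvb]
  have hT : Continuous fun x => V (1, x) := hVc.comp (by fun_prop)
  -- `W` clears the last row of `V (1, x)` linearly in time
  let L : I × X → Matrix (Fin (k + 1)) (Fin (k + 1)) A := fun p =>
    lowBlk 1 (-(((p.1 : ℝ) : ℂ) • lastRow (V (1, p.2))))
  have hLc : Continuous L := by
    have h1 : Continuous fun p : I × X => ((p.1 : ℝ) : ℂ) := by fun_prop
    have h2 : Continuous fun p : I × X => lastRow (V (1, p.2)) :=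
      continuous_lastRow.comp (hT.comp continuous_snd)
    exact Continuous.lowBlk continuous_const (h1.smul h2).neg
  let W : I × X → Matrix (Fin (k + 1)) (Fin (k + 1)) A := fun p => V p * L p
  have hWc : Continuous W := hVc.mul hLc
  have hWu : ∀ p, IsUnit (W p) := fun p => (hVu p).mul (isUnit_lowBlk_one _)
  have hWe : ∀ p, (W p).mulVec (eL k A) = fun i => v i (suspMk x0 p) := by
    intro p
    rw [← Matrix.mulVec_mulVec, lowBlk_mulVec_eL, hVe]
  have hW0 : ∀ x, W (0, x) = 1 := by
    intro x
    show V (0, x) * lowBlk 1 (-((((0 : I) : ℝ) : ℂ) • _)) = 1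
    rw [hV0, one_mul]
    simp [lowBlk_one_zero]
  have hWb : ∀ t, W (t, x0) = 1 := by
    intro t
    show V (t, x0) * lowBlk 1 (-(((t : ℝ) : ℂ) • lastRow (V (1, x0)))) = 1
    rw [hVb, hVb, one_mul, lastRow_one, smul_zero, neg_zero, lowBlk_one_zero]
  have hW1 : ∀ x, W (1, x) = stab (corner (V (1, x))) := by
    intro x
    show V (1, x) * lowBlk 1 (-((((1 : I) : ℝ) : ℂ) • lastRow (V (1, x)))) = _
    conv_lhs => enter [1]; rw [eq_lowBlk (hV1e x)]
    rw [lowBlk_mul, stab_eq_lowBlk]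
    simp
  let N : ContinuousMap X (GLs k A) :=
    ⟨fun x => ⟨corner (V (1, x)), isUnit_corner (hVu _) (hV1e x)⟩,
      (continuous_corner.comp hT).subtype_mk _⟩
  have hN : N x0 = GLone k A := Subtype.ext (by
    show corner (V (1, x0)) = 1
    rw [hVb, corner_one])
  obtain ⟨H⟩ := hinj (ContinuousMap.const X (GLone k A)) N rfl hN
    ⟨⟨⟨⟨fun p => ⟨W p, hWu p⟩, hWc.subtype_mk _⟩,
      fun x => Subtype.ext ((hW0 x).trans stab_one.symm),
      fun x => Subtype.ext (hW1 x)⟩, by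
      rintro t x rfl
      exact Subtype.ext ((hWb t).trans stab_one.symm)⟩⟩
  have hHu : ∀ p, IsUnit (stab (H p).1) := fun p => stab_isUnit (H p).2
  have hHc : Continuous fun p => stab (H p).1 :=
    continuous_stab.comp (continuous_subtype_val.comp H.continuous)
  have hH0 : ∀ x, stab (H (0, x)).1 = 1 := fun x => by
    rw [H.apply_zero]
    exact stab_one
  have hHb : ∀ t, stab (H (t, x0)).1 = 1 := fun t => by
    rw [H.eq_fst t (Set.mem_singleton x0)]
    exact stab_one
  have hH1 : ∀ x, stab (H (1, x)).1 = W (1, x) := fun x => by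
    rw [H.apply_one, hW1]
    rfl
  obtain ⟨Q, hQc, hQ⟩ := exists_suspLift (x0 := x0) (z := 1)
    (f := fun p => W p * Ring.inverse (stab (H p).1))
    (hWc.mul (continuous_ringInverse hHc hHu))
    (fun x => by simp only [hW0, hH0, Ring.inverse_one, one_mul])
    (fun x => by simp only [hH1, Ring.mul_inverse_cancel _ (hWu _)])
    (fun t => by simp only [hWb, hHb, Ring.inverse_one, one_mul])
  refine ⟨ofFun Q hQc, isUnit_of_evM fun q => ?_, ?_⟩
  · obtain ⟨p, rfl⟩ : ∃ p, suspMk x0 p = q := Quot.exists_rep q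
    rw [evM_ofFun, hQ]
    exact (hWu p).mul (hHu p).ringInverse
  · funext i
    ext q
    obtain ⟨p, rfl⟩ : ∃ p, suspMk x0 p = q := Quot.exists_rep q
    have h1 := evM_mulVec (ofFun Q hQc) (eL k _) (suspMk x0 p)
    rw [eL_apply, evM_ofFun, hQ, ← Matrix.mulVec_mulVec,
      inverse_mulVec (hHu p) (stab_mulVec_eL _), hWe] at h1
    exact congrFun h1 i

/-- Transitivity over `A` together with injectivity of stabilization gives transitivity over
`C(ΣX, A)`. -/
theorem GLtrans_susp [CompactSpace X] (hA : GLtrans (k + 1) A) (hinj : basedInjAt X x0 A k) :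
    GLtrans (k + 1) (ContinuousMap (Susp X x0) A) := by
  refine GLtrans_of_eL fun v hv => ?_
  -- constant matrices move the value at the base point to `e`
  obtain ⟨G, hG, hGv⟩ := hA _ (Lg_map (evC (suspPt x0)) hv) _ (eL_mem_Lg k A)
  have hG' : IsUnit (ofFun (Y := Susp X x0) (fun _ => G) continuous_const) :=
    isUnit_of_evM fun _ => hG
  obtain ⟨M, hM, hMv⟩ := exists_of_based hinj (Lg_mulVec hG' hv) (by
    rw [evM_mulVec]
    exact hGv)
  exact ⟨_, hG'.ringInverse.mul hM, by
    rw [← Matrix.mulVec_mulVec, hMv]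
    exact inverse_mulVec hG' rfl⟩

end Transitivity

/-- **Theorem.** For a pointed compact Hausdorff space `(X, x0)` and a unital C*-algebra
`A`, `gsr(C(ΣX, A)) = max {gsr(A), inj_X(A)}`. -/
theorem gsr_suspension_eq {X : Type*} [TopologicalSpace X] [CompactSpace X] [T2Space X]
    (x0 : X) {A : Type*} [CStarAlgebra A] :
    gsr (ContinuousMap (Susp X x0) A) = max (gsr A) (injXRank X x0 A) := by
  have hsucc : ∀ {m n : ℕ}, 1 ≤ n → n ≤ m → ∃ k, m = k + 1 := fun h1 h2 =>
    ⟨_, (Nat.succ_pred_eq_of_pos (h1.trans h2)).symm⟩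
  refine le_antisymm ?_ (max_le (sInf_le_sInf ?_) (sInf_le_sInf ?_))
  · by_cases hA : {N : ℕ∞ | ∃ n : ℕ, N = n ∧ 1 ≤ n ∧
        ∀ m : ℕ, n ≤ m → GLtrans m A}.Nonempty
    · by_cases hX : {N : ℕ∞ | ∃ n : ℕ, N = n ∧ 1 ≤ n ∧
          ∀ m : ℕ, n ≤ m + 1 → basedInjAt X x0 A m}.Nonempty
      · obtain ⟨a, ha, ha1, haP⟩ := csInf_mem hA
        obtain ⟨b, hb, hb1, hbP⟩ := csInf_mem hX
        rw [gsr, gsr, injXRank, ha, hb]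
        refine sInf_le ⟨max a b, by norm_cast, le_max_of_le_left ha1, fun m hm => ?_⟩
        obtain ⟨k, rfl⟩ := hsucc (le_max_of_le_left ha1) hm
        exact GLtrans_susp (haP _ ((le_max_left a b).trans hm))
          (hbP _ ((le_max_right a b).trans hm))
      · rw [injXRank, Set.not_nonempty_iff_eq_empty.mp hX, sInf_empty]
        exact le_max_of_le_right le_top
    · rw [gsr.eq_def A, Set.not_nonempty_iff_eq_empty.mp hA, sInf_empty]
      exact le_max_of_le_left le_top
  · rintro _ ⟨n, rfl, hn, hP⟩
    refine ⟨n, rfl, hn, fun m hm => ?_⟩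
    obtain ⟨k, rfl⟩ := hsucc hn hm
    exact GLtrans_base (hP _ hm)
  · rintro _ ⟨n, rfl, hn, hP⟩
    exact ⟨n, rfl, hn, fun m hm => basedInjAt_of_GLtrans (hP _ hm)⟩

end
end
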